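/- arXiv:1208.5273 — 2 statements merged into one kernel-verified Lean document; each statement's English description precedes it below -/
import Mathlib

section
/- General continuum convergence. Let (hf, hg) ∈ 𝒳², let m = min over [0,1]² of Φ(hf, hg; ·, ·), and let X_m = {(u,v) ∈ X(hf, hg) : Φ(hf, hg; u, v) = m}; then X_m is nonempty, closed, and componentwise ordered, so it has a componentwise smallest element (u′, v′) and a componentwise largest element (u″, v″). Let ω be a regular averaging kernel and let f⁰ ∈ Ψ satisfy f⁰(−∞) ≤ v″ and f⁰(+∞) ≥ v′. Then in the continuum spatially coupled recursion, for every x ∈ ℝ: liminf_{t→∞} f^t(x) ≥ v′, liminf_{t→∞} g^t(x) ≥ u′, limsup_{t→∞} f^t(x) ≤ v″, and limsup_{t→∞} g^t(x) ≤ u″. -/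
open MeasureTheory Filter Set

noncomputable section

/-- Convolution `(f ⊗ ω)(x) = ∫ y, f y · ω (x − y)`. -/
def conv (f ω : ℝ → ℝ) (x : ℝ) : ℝ := ∫ y : ℝ, f y * ω (x - y)

/-- `ω` is an averaging kernel: even, nonnegative, of bounded variation, integrating to 1. -/
def IsAveragingKernel (ω : ℝ → ℝ) : Prop :=
  (∀ x, ω (-x) = ω x) ∧ (∀ x, 0 ≤ ω x) ∧ BoundedVariationOn ω Set.univ ∧
    MeasureTheory.Integrable ω ∧ (∫ x : ℝ, ω x) = 1

/-- The essential supremum `‖ω‖∞` of a kernel, as a real number. -/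
def kerSup (ω : ℝ → ℝ) : ℝ := (eLpNorm ω ⊤ MeasureTheory.volume).toReal

/-- `ω` is regular: for some `W ∈ (0,∞]`, it vanishes outside `[−W, W]` and is
positive on `(−W, W)` (the case `W = ∞` being that `ω` is everywhere positive). -/
def IsRegularKernel (ω : ℝ → ℝ) : Prop :=
  (∀ x, 0 < ω x) ∨
    ∃ W : ℝ, 0 < W ∧ (∀ x, W < |x| → ω x = 0) ∧ (∀ x, |x| < W → 0 < ω x)

/-- Membership in `𝒳`: nondecreasing self-maps of `[0,1]`. -/
def MemX (h : ℝ → ℝ) : Prop :=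
  MonotoneOn h (Icc 0 1) ∧ MapsTo h (Icc 0 1) (Icc 0 1)

/-- Left limit `h(u−)` of `h ∈ 𝒳` at `u ∈ [0,1]`, with the convention `h(0−) = 0`. -/
def lm (h : ℝ → ℝ) (u : ℝ) : ℝ := if u ≤ 0 then 0 else sSup (h '' Ico 0 u)

/-- Right limit `h(u+)` of `h ∈ 𝒳` at `u ∈ [0,1]`, with the convention `h(1+) = 1`. -/
def rm (h : ℝ → ℝ) (u : ℝ) : ℝ := if 1 ≤ u then 1 else sInf (h '' Ioc u 1)

/-- A canonical generalized inverse of `h ∈ 𝒳` (any valid inverse has the same integrals,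
so the potential below is unambiguous). -/
def Xinv (h : ℝ → ℝ) (v : ℝ) : ℝ := sInf ({1} ∪ {u ∈ Icc (0:ℝ) 1 | v ≤ h u})

/-- The potential `Φ(hf, hg; u, v) = ∫₀ᵘ hg⁻¹ + ∫₀ᵛ hf⁻¹ − u·v`. -/
def Pot (hf hg : ℝ → ℝ) (u v : ℝ) : ℝ :=
  (∫ x in (0:ℝ)..u, Xinv hg x) + (∫ x in (0:ℝ)..v, Xinv hf x) - u * v

/-- `A(hf, hg) = Φ(hf, hg; 1, 1)`. -/
def Agap (hf hg : ℝ → ℝ) : ℝ := Pot hf hg 1 1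

/-- `(u,v)` is a crossing point of `(hf, hg)`:
`u ∈ [hg(v−), hg(v+)]` and `v ∈ [hf(u−), hf(u+)]`. -/
def IsCrossing (hf hg : ℝ → ℝ) (u v : ℝ) : Prop :=
  u ∈ Icc (0:ℝ) 1 ∧ v ∈ Icc (0:ℝ) 1 ∧
    u ∈ Icc (lm hg v) (rm hg v) ∧ v ∈ Icc (lm hf u) (rm hf u)

/-- The strictly positive gap condition: there is a nontrivial crossing point, and every
nontrivial crossing point satisfies `Φ(hf, hg; u, v) > max {0, A(hf, hg)}`. -/
def StrictPosGap (hf hg : ℝ → ℝ) : Prop :=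
  (∃ u v, IsCrossing hf hg u v ∧ ¬(u = 0 ∧ v = 0) ∧ ¬(u = 1 ∧ v = 1)) ∧
    ∀ u v, IsCrossing hf hg u v → ¬(u = 0 ∧ v = 0) → ¬(u = 1 ∧ v = 1) →
      max 0 (Agap hf hg) < Pot hf hg u v

/-- Membership in `Ψ`: nondecreasing functions `ℝ → [0,1]`. -/
def MemPsi (f : ℝ → ℝ) : Prop := Monotone f ∧ ∀ x, f x ∈ Icc (0:ℝ) 1

/-- `f` is `(a,b)`-interpolating: limits `a` at `−∞` and `b` at `+∞`. -/
def Interpolates (f : ℝ → ℝ) (a b : ℝ) : Prop :=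
  Filter.Tendsto f Filter.atBot (nhds a) ∧ Filter.Tendsto f Filter.atTop (nhds b)

structure Ker (ω : ℝ → ℝ) (C : ℝ) : Prop where
  even : ∀ x, ω (-x) = ω x
  nn : ∀ x, 0 ≤ ω x
  int : Integrable ω
  one : (∫ x : ℝ, ω x) = 1
  bd : ∀ x, ω x ≤ C

lemma psi_meas {F : ℝ → ℝ} (hF : MemPsi F) : AEStronglyMeasurable F volume :=
  hF.1.measurable.aestronglyMeasurable

lemma psi_norm {F : ℝ → ℝ} (hF : MemPsi F) (x : ℝ) : ‖F x‖ ≤ 1 := by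
  rw [Real.norm_eq_abs, abs_le]; have := hF.2 x; constructor <;> linarith [this.1, this.2]

lemma conv_eq (F ω : ℝ → ℝ) (x : ℝ) : conv F ω x = ∫ z, F (x - z) * ω z := by
  unfold conv
  rw [← integral_sub_left_eq_self (fun y => F y * ω (x - y)) volume x]
  simp

lemma psi_refl {F : ℝ → ℝ} (hF : MemPsi F) (x : ℝ) :
    AEStronglyMeasurable (fun z => F (x - z)) volume :=
  (hF.1.measurable.comp (measurable_const.sub measurable_id)).aestronglyMeasurable

lemma conv_int {ω : ℝ → ℝ} {C : ℝ} (hω : Ker ω C) {F : ℝ → ℝ} (hF : MemPsi F) (x : ℝ) :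
    Integrable (fun z => F (x - z) * ω z) := by
  refine hω.int.bdd_mul (c := 1) (psi_refl hF x) ?_
  exact Eventually.of_forall fun z => psi_norm hF _

lemma conv_int' {ω : ℝ → ℝ} {C : ℝ} (hω : Ker ω C) {F : ℝ → ℝ} (hF : MemPsi F) (x : ℝ) :
    Integrable (fun z => F z * ω (x - z)) := by
  refine (hω.int.comp_sub_left x).bdd_mul (c := 1) (psi_meas hF) ?_
  exact Eventually.of_forall fun z => psi_norm hF _

lemma conv_mono_fun {ω : ℝ → ℝ} {C : ℝ} (hω : Ker ω C) {F G : ℝ → ℝ} (hF : MemPsi F)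
    (hG : MemPsi G) (h : ∀ x, F x ≤ G x) (x : ℝ) : conv F ω x ≤ conv G ω x := by
  rw [conv_eq, conv_eq]
  exact integral_mono (conv_int hω hF x) (conv_int hω hG x)
    fun z => mul_le_mul_of_nonneg_right (h _) (hω.nn _)

lemma conv_mono {ω : ℝ → ℝ} {C : ℝ} (hω : Ker ω C) {F : ℝ → ℝ} (hF : MemPsi F) :
    Monotone (conv F ω) := by
  intro x y hxy
  rw [conv_eq, conv_eq]
  exact integral_mono (conv_int hω hF x) (conv_int hω hF y)
    fun z => mul_le_mul_of_nonneg_right (hF.1 (by linarith)) (hω.nn _)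

lemma conv_shift (F ω : ℝ → ℝ) (Y x : ℝ) :
    conv (fun y => F (y - Y)) ω x = conv F ω (x - Y) := by
  rw [conv_eq, conv_eq]
  congr 1; ext z; congr 2; ring

lemma conv_const {ω : ℝ → ℝ} {C : ℝ} (hω : Ker ω C) (c x : ℝ) :
    conv (fun _ => c) ω x = c := by
  rw [conv_eq]
  rw [integral_const_mul, hω.one, mul_one]

lemma psi_const {c : ℝ} (h : c ∈ Icc (0:ℝ) 1) : MemPsi (fun _ => c) :=
  ⟨fun _ _ _ => le_rfl, fun _ => h⟩

lemma conv_nonneg {ω : ℝ → ℝ} {C : ℝ} (hω : Ker ω C) {F : ℝ → ℝ} (hF : MemPsi F) (x : ℝ) :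
    0 ≤ conv F ω x := by
  have := conv_mono_fun hω (psi_const (c := 0) (by simp)) hF (fun y => (hF.2 y).1) x
  rwa [conv_const hω] at this

lemma conv_le {ω : ℝ → ℝ} {C : ℝ} (hω : Ker ω C) {F : ℝ → ℝ} (hF : MemPsi F) {a : ℝ}
    (ha : a ∈ Icc (0:ℝ) 1) (h : ∀ x, F x ≤ a) (x : ℝ) : conv F ω x ≤ a := by
  have := conv_mono_fun hω hF (psi_const ha) h x
  rwa [conv_const hω] at this

lemma conv_psi {ω : ℝ → ℝ} {C : ℝ} (hω : Ker ω C) {F : ℝ → ℝ} (hF : MemPsi F) :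
    MemPsi (conv F ω) :=
  ⟨conv_mono hω hF, fun x => ⟨conv_nonneg hω hF x,
    conv_le hω hF (by simp) (fun y => (hF.2 y).2) x⟩⟩

lemma conv_tendsto_gen {ω : ℝ → ℝ} {C : ℝ} (hω : Ker ω C) {ι : Type*} {l : Filter ι}
    [l.IsCountablyGenerated] {F : ι → ℝ → ℝ} {L : ℝ → ℝ} (hF : ∀ i, MemPsi (F i))
    (x : ι → ℝ) (h : ∀ z, Tendsto (fun i => F i (x i - z)) l (nhds (L z))) :
    Tendsto (fun i => conv (F i) ω (x i)) l (nhds (∫ z, L z * ω z)) := by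
  simp_rw [conv_eq]
  refine tendsto_integral_filter_of_dominated_convergence ω ?_ ?_ hω.int ?_
  · exact Eventually.of_forall fun i => (conv_int hω (hF i) (x i)).aestronglyMeasurable
  · refine Eventually.of_forall fun i => Eventually.of_forall fun z => ?_
    rw [norm_mul, Real.norm_of_nonneg (hω.nn z)]
    exact mul_le_of_le_one_left (hω.nn z) (psi_norm (hF i) _)
  · exact Eventually.of_forall fun z => (h z).mul_const _

lemma conv_tendsto_seq {ω : ℝ → ℝ} {C : ℝ} (hω : Ker ω C)
    {F : ℕ → ℝ → ℝ} {L : ℝ → ℝ} (hF : ∀ i, MemPsi (F i))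
    (h : ∀ z, Tendsto (fun i => F i z) atTop (nhds (L z))) (x : ℝ) :
    Tendsto (fun i => conv (F i) ω x) atTop (nhds (conv L ω x)) := by
  rw [conv_eq L]
  exact conv_tendsto_gen hω hF (fun _ => x) (fun z => h _)

lemma conv_tendsto_top {ω : ℝ → ℝ} {C : ℝ} (hω : Ker ω C) {F : ℝ → ℝ} (hF : MemPsi F) {a : ℝ}
    (h : Tendsto F atTop (nhds a)) : Tendsto (conv F ω) atTop (nhds a) := by
  have := conv_tendsto_gen hω (l := atTop) (F := fun _ : ℝ => F) (L := fun _ => a)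
    (fun _ => hF) (fun x => x)
    (fun z => h.comp (tendsto_atTop_add_const_right _ (-z) tendsto_id))
  rwa [integral_const_mul, hω.one, mul_one] at this

lemma conv_tendsto_bot {ω : ℝ → ℝ} {C : ℝ} (hω : Ker ω C) {F : ℝ → ℝ} (hF : MemPsi F) {a : ℝ}
    (h : Tendsto F atBot (nhds a)) : Tendsto (conv F ω) atBot (nhds a) := by
  have := conv_tendsto_gen hω (l := atBot) (F := fun _ : ℝ => F) (L := fun _ => a)
    (fun _ => hF) (fun x => x)
    (fun z => h.comp (tendsto_atBot_add_const_right _ (-z) tendsto_id))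
  rwa [integral_const_mul, hω.one, mul_one] at this

/-- telescoping -/
lemma tele {F : ℝ → ℝ} (hF : Monotone F) {l L s : ℝ} (hs : 0 < s)
    (hl : Tendsto F atBot (nhds l)) (hL : Tendsto F atTop (nhds L)) :
    Integrable (fun x => F (x + s) - F x) ∧ ∫ x, (F (x + s) - F x) = s * (L - l) := by
  have ii : ∀ a b : ℝ, IntervalIntegrable F volume a b := fun a b => hF.intervalIntegrable
  have hFs : Monotone (fun x => F (x + s)) := fun x y h => hF (by linarith)
  have key : ∀ R : ℝ, ∫ x in (-R)..R, (F (x + s) - F x)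
      = (∫ x in (R)..(R + s), F x) - ∫ x in (-R)..(-R + s), F x := by
    intro R
    rw [intervalIntegral.integral_sub hFs.intervalIntegrable (ii _ _),
      intervalIntegral.integral_comp_add_right]
    have h1 := intervalIntegral.integral_add_adjacent_intervals (ii (-R) (-R+s)) (ii (-R+s) (R+s))
    have h2 := intervalIntegral.integral_add_adjacent_intervals (ii (-R) R) (ii R (R+s))
    linarith
  have t1 : Tendsto (fun R : ℝ => ∫ x in (R)..(R + s), F x) atTop (nhds (s * L)) := by
    have lo : Tendsto (fun R : ℝ => s * F R) atTop (nhds (s * L)) := hL.const_mul s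
    have hi : Tendsto (fun R : ℝ => s * F (R + s)) atTop (nhds (s * L)) :=
      (hL.comp (tendsto_atTop_add_const_right _ s tendsto_id)).const_mul s
    refine tendsto_of_tendsto_of_tendsto_of_le_of_le lo hi ?_ ?_
    · intro R
      have := intervalIntegral.integral_mono_on (a := R) (b := R + s) (by linarith)
        (_root_.intervalIntegrable_const (c := F R)) (ii _ _) (fun x hx => hF hx.1)
      simpa using this
    · intro R
      have := intervalIntegral.integral_mono_on (a := R) (b := R + s) (by linarith)
        (ii _ _) (_root_.intervalIntegrable_const (c := F (R + s))) (fun x hx => hF hx.2)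
      simpa using this
  have t2 : Tendsto (fun R : ℝ => ∫ x in (-R)..(-R + s), F x) atTop (nhds (s * l)) := by
    have lo : Tendsto (fun R : ℝ => s * F (-R)) atTop (nhds (s * l)) :=
      (hl.comp tendsto_neg_atTop_atBot).const_mul s
    have hi : Tendsto (fun R : ℝ => s * F (-R + s)) atTop (nhds (s * l)) :=
      (hl.comp (tendsto_atBot_add_const_right _ s tendsto_neg_atTop_atBot)).const_mul s
    refine tendsto_of_tendsto_of_tendsto_of_le_of_le lo hi ?_ ?_
    · intro R
      have := intervalIntegral.integral_mono_on (a := -R) (b := -R + s) (by linarith)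
        (_root_.intervalIntegrable_const (c := F (-R))) (ii _ _) (fun x hx => hF hx.1)
      simpa using this
    · intro R
      have := intervalIntegral.integral_mono_on (a := -R) (b := -R + s) (by linarith)
        (ii _ _) (_root_.intervalIntegrable_const (c := F (-R + s))) (fun x hx => hF hx.2)
      simpa using this
  have t3 : Tendsto (fun R : ℝ => ∫ x in (-R)..R, (F (x + s) - F x)) atTop
      (nhds (s * (L - l))) := by
    simp_rw [key]; rw [mul_sub]; exact t1.sub t2
  have nn : ∀ x, 0 ≤ F (x + s) - F x := fun x => sub_nonneg.2 (hF (by linarith))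
  have hint : Integrable (fun x => F (x + s) - F x) := by
    refine integrable_of_intervalIntegral_norm_tendsto (s * (L - l)) (a := fun R : ℝ => -R)
      (b := fun R : ℝ => R) (l := atTop) ?_ tendsto_neg_atTop_atBot tendsto_id ?_
    · intro R
      have : IntervalIntegrable (fun x => F (x + s) - F x) volume (-R) R :=
        hFs.intervalIntegrable.sub (ii _ _)
      exact this.1
    · refine t3.congr fun R => ?_
      congr 1; ext x; rw [Real.norm_of_nonneg (nn x)]
  refine ⟨hint, ?_⟩
  exact tendsto_nhds_unique
    (intervalIntegral_tendsto_integral hint tendsto_neg_atTop_atBot tendsto_id) t3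

structure HPot (h H : ℝ → ℝ) : Prop where
  k0 : ∀ v w, 0 ≤ v → v ≤ w → w ≤ 1 → 0 ≤ H w - H v
  k0' : ∀ v w, 0 ≤ v → v ≤ w → w ≤ 1 → H w - H v ≤ w - v
  k1 : ∀ q v w, 0 ≤ q → q ≤ 1 → 0 ≤ v → v ≤ w → w ≤ 1 → h q ≤ v → q * (w - v) ≤ H w - H v
  k2 : ∀ q v w, 0 ≤ q → q ≤ 1 → 0 ≤ v → v ≤ w → w ≤ 1 → w ≤ h q → H w - H v ≤ q * (w - v)

lemma HPot.cont {h H : ℝ → ℝ} (hH : HPot h H) : ContinuousOn H (Icc 0 1) := by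
  have : LipschitzOnWith 1 H (Icc 0 1) := by
    refine LipschitzOnWith.of_le_add fun x hx y hy => ?_
    rw [Real.dist_eq]
    rcases le_total x y with hxy | hxy
    · have := hH.k0 x y hx.1 hxy hy.2
      linarith [abs_nonneg (x - y)]
    · have := hH.k0' y x hy.1 hxy hx.2
      linarith [le_abs_self (x - y)]
  exact this.continuousOn

lemma HPot.mono {h H : ℝ → ℝ} (hH : HPot h H) {κ : ℝ} (hκ : 0 ≤ κ) {F : ℝ → ℝ}
    (hF : MemPsi F) : Monotone (fun x => H (F x) + κ * F x) := by
  intro x y hxy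
  have h1 := hH.k0 (F x) (F y) (hF.2 x).1 (hF.1 hxy) (hF.2 y).2
  have h2 := mul_le_mul_of_nonneg_left (hF.1 hxy) hκ
  simp only; linarith

lemma HPot.tend {h H : ℝ → ℝ} (hH : HPot h H) (κ : ℝ) {F : ℝ → ℝ}
    (hF : MemPsi F) {l : Filter ℝ} {a : ℝ} (ha : a ∈ Icc (0:ℝ) 1) (ht : Tendsto F l (nhds a)) :
    Tendsto (fun x => H (F x) + κ * F x) l (nhds (H a + κ * a)) := by
  refine Tendsto.add ?_ (ht.const_mul κ)
  have := hH.cont a ha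
  refine Tendsto.comp this ?_
  exact tendsto_nhdsWithin_iff.2 ⟨ht, Eventually.of_forall hF.2⟩

def ee (h : ℝ → ℝ) (c q : ℝ) : ℝ := if q < 0 then 0 else min c (h (min q 1))

lemma conv_swap {ω : ℝ → ℝ} {C : ℝ} (hω : Ker ω C) {G : ℝ → ℝ} (hG : MemPsi G) {D : ℝ → ℝ}
    (hD : Integrable D) : ∫ x, conv G ω x * D x = ∫ y, G y * conv D ω y := by
  have h1 : Integrable (fun p : ℝ × ℝ => D p.2 * ω (p.1 - p.2)) (volume.prod volume) := by
    have := hD.convolution_integrand (ContinuousLinearMap.mul ℝ ℝ) hω.int (μ := volume)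
    simpa using this
  have h2 : Integrable (fun p : ℝ × ℝ => G p.1 * (D p.2 * ω (p.1 - p.2)))
      (volume.prod volume) := by
    refine h1.bdd_mul (c := 1) ?_ ?_
    · exact (hG.1.measurable.comp measurable_fst).aestronglyMeasurable
    · exact Eventually.of_forall fun z => psi_norm hG _
  have h3 := integral_integral_swap (f := fun y x => G y * (D x * ω (y - x))) h2
  have e1 : ∀ y, G y * conv D ω y = ∫ x, G y * (D x * ω (y - x)) := by
    intro y; rw [integral_const_mul]; rfl
  have e2 : ∀ x, conv G ω x * D x = ∫ y, G y * (D x * ω (y - x)) := by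
    intro x; unfold conv; rw [← integral_mul_const]
    congr 1; ext y
    have : ω (y - x) = ω (x - y) := by rw [← hω.even (x - y)]; congr 1; ring
    rw [this]; ring
  simp_rw [e1, e2]
  exact h3.symm

lemma conv_diff {ω : ℝ → ℝ} {C : ℝ} (hω : Ker ω C) {F : ℝ → ℝ} (hF : MemPsi F) (s y : ℝ) :
    conv (fun x => F (x + s) - F x) ω y = conv F ω (y + s) - conv F ω y := by
  have hFs : MemPsi (fun x => F (x + s)) := ⟨fun x y h => hF.1 (by linarith), fun x => hF.2 _⟩
  have e : conv F ω (y + s) = conv (fun x => F (x + s)) ω y := by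
    have := conv_shift F ω (-s) y
    simp only [sub_neg_eq_add] at this
    exact this.symm
  rw [e]
  unfold conv
  rw [← integral_sub (conv_int' hω hFs y) (conv_int' hω hF y)]
  congr 1; ext x; ring

lemma energy_pt {h H : ℝ → ℝ} (hH : HPot h H) {κ a : ℝ} (hκ : 0 ≤ κ) (ha : a ≤ 1) {v w r : ℝ}
    (hv : 0 ≤ v) (hvw : v ≤ w) (hw : w ≤ a) (hr : r ≤ 1)
    (hsup : ee h a (r - κ) ≤ v) : r * (w - v) ≤ (H w + κ * w) - (H v + κ * v) := by
  unfold ee at hsup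
  split_ifs at hsup with hneg
  · have := hH.k0 v w hv hvw (hw.trans ha)
    nlinarith
  · push Not at hneg
    rw [min_eq_left (by linarith : r - κ ≤ 1)] at hsup
    rcases min_le_iff.1 hsup with h1 | h1
    · have : w = v := by linarith
      subst this; linarith
    · have := hH.k1 (r - κ) v w hneg (by linarith) hv hvw (hw.trans ha) h1
      nlinarith

lemma psi_lim_bot {F : ℝ → ℝ} (hF : MemPsi F) : ∃ α ∈ Icc (0:ℝ) 1, (∀ x, α ≤ F x) ∧
    Tendsto F atBot (nhds α) := by
  have bd : BddBelow (range F) := ⟨0, by rintro _ ⟨x, rfl⟩; exact (hF.2 x).1⟩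
  refine ⟨⨅ x, F x, ⟨le_ciInf fun x => (hF.2 x).1, (ciInf_le bd 0).trans (hF.2 0).2⟩,
    fun x => ciInf_le bd x, tendsto_atBot_ciInf hF.1 bd⟩

lemma super {ω : ℝ → ℝ} {C : ℝ} (hω : Ker ω C) {hf hg Hf Hg : ℝ → ℝ} (hHf : HPot hf Hf)
    (hHg : HPot hg Hg) {κ a b : ℝ} (hκ : 0 ≤ κ) (ha : a ∈ Icc (0:ℝ) 1) (hb : b ∈ Icc (0:ℝ) 1)
    (strict : ∀ u ∈ Icc 0 b, ∀ v ∈ Icc 0 a, Hg u + Hf v - u * v + κ * (u + v) ≤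
      Hg b + Hf a - b * a + κ * (b + a) → u = b ∧ v = a)
    {F G : ℝ → ℝ} (hF : MemPsi F) (hG : MemPsi G) (hFa : ∀ x, F x ≤ a) (hGb : ∀ x, G x ≤ b)
    (tF : Tendsto F atTop (nhds a)) (tG : Tendsto G atTop (nhds b))
    (sF : ∀ x, ee hf a (conv G ω x - κ) ≤ F x) (sG : ∀ x, ee hg b (conv F ω x - κ) ≤ G x) :
    ∀ x, F x = a ∧ G x = b := by
  obtain ⟨α, hα, hαF, tα⟩ := psi_lim_bot hF
  obtain ⟨β, hβ, hβG, tβ⟩ := psi_lim_bot hG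
  have hP := conv_psi hω hF
  have hR := conv_psi hω hG
  have tPa := conv_tendsto_top hω hF tF
  have tPα := conv_tendsto_bot hω hF tα
  have hC : 0 ≤ C := (hω.nn 0).trans (hω.bd 0)
  have main : ∀ s : ℝ, 0 < s → s * (b * a - β * α) - s * (C * s) ≤
      s * ((Hf a + κ * a) - (Hf α + κ * α)) + s * ((Hg b + κ * b) - (Hg β + κ * β)) := by
    intro s hs
    have hGP : Monotone (fun x => G x * conv F ω x) := fun x y h =>
      mul_le_mul (hG.1 h) (hP.1 h) (hP.2 x).1 (hG.2 y).1
    obtain ⟨iF, eF⟩ := tele hF.1 hs tα tF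
    obtain ⟨iG, eG⟩ := tele hG.1 hs tβ tG
    obtain ⟨iP, eP⟩ := tele hP.1 hs tPα tPa
    obtain ⟨iHF, eHF⟩ := tele (hHf.mono hκ hF) hs (hHf.tend κ hF hα tα) (hHf.tend κ hF ha tF)
    obtain ⟨iHG, eHG⟩ := tele (hHg.mono hκ hG) hs (hHg.tend κ hG hβ tβ) (hHg.tend κ hG hb tG)
    obtain ⟨iGP, eGP⟩ := tele hGP hs (tβ.mul tPα) (tG.mul tPa)
    have iRF : Integrable (fun x => conv G ω x * (F (x + s) - F x)) :=
      iF.bdd_mul (c := 1) (psi_meas hR) (Eventually.of_forall fun z => psi_norm hR _)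
    have iPG : Integrable (fun x => conv F ω x * (G (x + s) - G x)) :=
      iG.bdd_mul (c := 1) (psi_meas hP) (Eventually.of_forall fun z => psi_norm hP _)
    have iGdP : Integrable (fun x => G x * (conv F ω (x + s) - conv F ω x)) :=
      iP.bdd_mul (c := 1) (psi_meas hG) (Eventually.of_forall fun z => psi_norm hG _)
    have l1 : ∫ x, conv G ω x * (F (x + s) - F x) ≤ s * ((Hf a + κ * a) - (Hf α + κ * α)) := by
      rw [← eHF]
      refine integral_mono iRF iHF fun x => ?_
      exact energy_pt hHf hκ ha.2 (hF.2 x).1 (hF.1 (by linarith)) (hFa _) (hR.2 x).2 (sF x)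
    have l2 : ∫ x, conv F ω x * (G (x + s) - G x) ≤ s * ((Hg b + κ * b) - (Hg β + κ * β)) := by
      rw [← eHG]
      refine integral_mono iPG iHG fun x => ?_
      exact energy_pt hHg hκ hb.2 (hG.2 x).1 (hG.1 (by linarith)) (hGb _) (hP.2 x).2 (sG x)
    have l3 : ∫ x, conv G ω x * (F (x + s) - F x)
        = ∫ x, G x * (conv F ω (x + s) - conv F ω x) := by
      rw [conv_swap hω hG iF]
      simp_rw [conv_diff hω hF]
    have l4 : ∀ x, conv F ω (x + s) - conv F ω x ≤ C * s := by
      intro x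
      rw [← conv_diff hω hF]
      unfold conv
      have hnn : ∀ y, 0 ≤ F (y + s) - F y := fun y => sub_nonneg.2 (hF.1 (by linarith))
      have hFs : MemPsi (fun x => F (x + s)) :=
        ⟨fun x y h => hF.1 (by linarith), fun x => hF.2 _⟩
      have hi : Integrable (fun y => (F (y + s) - F y) * ω (x - y)) := by
        have := (conv_int' hω hFs x).sub (conv_int' hω hF x)
        refine this.congr (Eventually.of_forall fun y => ?_)
        simp only [Pi.sub_apply]; ring
      calc ∫ y, (F (y + s) - F y) * ω (x - y) ≤ ∫ y, (F (y + s) - F y) * C :=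
            integral_mono hi (iF.mul_const C) fun y =>
              mul_le_mul_of_nonneg_left (hω.bd _) (hnn y)
        _ = s * (a - α) * C := by rw [integral_mul_const, eF]
        _ ≤ C * s := by
            have : s * (a - α) * C ≤ s * 1 * C := by
              gcongr; linarith [ha.2, hα.1]
            linarith
    have l5 : s * (b * a - β * α) ≤ ∫ x, (G x * (conv F ω (x + s) - conv F ω x)
        + conv F ω x * (G (x + s) - G x) + (C * s) * (G (x + s) - G x)) := by
      rw [← eGP]
      refine integral_mono iGP ((iGdP.add iPG).add (iG.const_mul _)) fun x => ?_
      have hnn : 0 ≤ G (x + s) - G x := sub_nonneg.2 (hG.1 (by linarith))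
      have := mul_le_mul_of_nonneg_right (l4 x) hnn
      simp only; nlinarith
    have l6 : ∫ x, (G x * (conv F ω (x + s) - conv F ω x)
        + conv F ω x * (G (x + s) - G x) + (C * s) * (G (x + s) - G x)) =
        (∫ x, G x * (conv F ω (x + s) - conv F ω x)) + (∫ x, conv F ω x * (G (x + s) - G x))
        + (C * s) * (s * (b - β)) := by
      have isum : Integrable (fun x => G x * (conv F ω (x + s) - conv F ω x)
        + conv F ω x * (G (x + s) - G x)) := iGdP.add iPG
      rw [integral_add isum (iG.const_mul _), integral_add iGdP iPG,
        integral_const_mul, eG]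
    have l7 : (C * s) * (s * (b - β)) ≤ s * (C * s) := by
      have : (C * s) * (s * (b - β)) ≤ (C * s) * (s * 1) := by
        gcongr; linarith [hb.2, hβ.1]
      linarith
    linarith
  have main2 : Hg β + Hf α - β * α + κ * (β + α) ≤ Hg b + Hf a - b * a + κ * (b + a) := by
    have key : ∀ s : ℝ, 0 < s → (b * a - β * α) - C * s ≤
      ((Hf a + κ * a) - (Hf α + κ * α)) + ((Hg b + κ * b) - (Hg β + κ * β)) := by
      intro s hs
      have := main s hs
      rw [← mul_sub, ← mul_add] at this
      exact le_of_mul_le_mul_left this hs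
    have : (b * a - β * α) ≤
      ((Hf a + κ * a) - (Hf α + κ * α)) + ((Hg b + κ * b) - (Hg β + κ * β)) := by
      refine le_of_forall_pos_le_add fun ε hε => ?_
      have h1 := key (ε / (C + 1)) (by positivity)
      have h2 : C * (ε / (C + 1)) ≤ ε := by
        rw [mul_div_assoc', div_le_iff₀ (by positivity)]; nlinarith
      linarith
    linarith
  obtain ⟨e1, e2⟩ := strict β ⟨hβ.1, (hβG 0).trans (hGb 0)⟩ α ⟨hα.1, (hαF 0).trans (hFa 0)⟩ main2
  exact fun x => ⟨le_antisymm (hFa x) (e2 ▸ hαF x), le_antisymm (hGb x) (e1 ▸ hβG x)⟩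

lemma ee_mem {h : ℝ → ℝ} (hh : MemX h) {c : ℝ} (hc : 0 ≤ c) (q : ℝ) : ee h c q ∈ Icc 0 c := by
  unfold ee
  split_ifs with hq
  · exact ⟨le_rfl, hc⟩
  · push Not at hq
    have := hh.2 (x := min q 1) ⟨le_min hq zero_le_one, min_le_right _ _⟩
    exact ⟨le_min hc this.1, min_le_left _ _⟩

lemma ee_mono {h : ℝ → ℝ} (hh : MemX h) {c : ℝ} (hc : 0 ≤ c) : Monotone (ee h c) := by
  intro p q hpq
  by_cases hp : p < 0
  · have : ee h c p = 0 := by simp [ee, hp]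
    rw [this]; exact (ee_mem hh hc q).1
  · have hq : ¬ q < 0 := by linarith
    simp only [ee, hp, hq, if_false]
    push Not at hp hq
    refine min_le_min le_rfl (hh.1 ⟨le_min hp zero_le_one, min_le_right _ _⟩
      ⟨le_min hq zero_le_one, min_le_right _ _⟩ (min_le_min hpq le_rfl))

lemma ee_le {h : ℝ → ℝ} (hh : MemX h) {c : ℝ} {p q : ℝ} (hpq : q ≤ p)
    (hp : p ∈ Icc (0:ℝ) 1) : ee h c q ≤ h p := by
  unfold ee
  split_ifs with hq
  · exact (hh.2 hp).1
  · push Not at hq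
    refine (min_le_right _ _).trans (hh.1 ⟨le_min hq zero_le_one, min_le_right _ _⟩ hp ?_)
    exact (min_le_left _ _).trans hpq

lemma ee_top {h H : ℝ → ℝ} (hh : MemX h) (hH : HPot h H) {a b κ : ℝ} (hκ : 0 < κ)
    (ha : a ∈ Icc (0:ℝ) 1) (hb : b ∈ Icc (0:ℝ) 1)
    (mini : ∀ u ∈ Icc 0 b, H b - H u + 4 * κ * (b - u) ≤ a * (b - u)) {q : ℝ}
    (hq : a - 4 * κ < q) : ee h b q = b := by
  rcases hb.1.eq_or_lt with h0 | h0
  · have := ee_mem hh hb.1 q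
    exact le_antisymm this.2 (by rw [← h0] at this ⊢; exact this.1)
  · have h1 := mini 0 ⟨le_rfl, hb.1⟩
    have h2 := hH.k0 0 b le_rfl hb.1 hb.2
    have h3 : 4 * κ ≤ a := by
      by_contra hcon
      push Not at hcon
      nlinarith
    have hq0 : ¬ q < 0 := by linarith
    simp only [ee, hq0, if_false]
    push Not at hq0
    have hp : min q 1 ∈ Icc (0:ℝ) 1 := ⟨le_min hq0 zero_le_one, min_le_right _ _⟩
    have hp' : a - 4 * κ < min q 1 := lt_min hq (by linarith [ha.2])
    refine min_eq_left ?_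
    by_contra hcon
    push Not at hcon
    have h4 := mini (h (min q 1)) ⟨(hh.2 hp).1, hcon.le⟩
    have h5 := hH.k1 (min q 1) (h (min q 1)) b hp.1 hp.2 (hh.2 hp).1 hcon.le hb.2 le_rfl
    nlinarith

def stp (a x : ℝ) : ℝ := if 0 ≤ x then a else 0

lemma stp_psi {a : ℝ} (ha : a ∈ Icc (0:ℝ) 1) : MemPsi (stp a) := by
  constructor
  · intro x y hxy
    unfold stp
    split_ifs with h1 h2
    · exact le_rfl
    · linarith
    · exact ha.1
    · exact le_rfl
  · intro x; unfold stp; split_ifs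
    · exact ha
    · simp

lemma stp_top (a : ℝ) : Tendsto (stp a) atTop (nhds a) := by
  refine tendsto_const_nhds.congr' ?_
  filter_upwards [eventually_ge_atTop 0] with x hx
  simp [stp, hx]

lemma conv_slack {ω : ℝ → ℝ} {C : ℝ} (hω : Ker ω C) {κ : ℝ} (hκ : 0 < κ) : ∃ s : ℝ, 0 < s ∧
    ∀ F : ℝ → ℝ, MemPsi F → ∀ c ∈ Icc (0:ℝ) 1, ∀ y, (∀ x, y ≤ x → c ≤ F x) →
      ∀ x, y + s ≤ x → c - κ ≤ conv F ω x := by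
  have h1 : (1:ℝ) ∈ Icc (0:ℝ) 1 := by simp
  have t := conv_tendsto_top hω (stp_psi h1) (stp_top 1)
  have ev := (t.eventually (lt_mem_nhds (by linarith : 1 - κ < 1))).and (eventually_gt_atTop 0)
  obtain ⟨s, hs1, hs0⟩ := ev.exists
  refine ⟨s, hs0, fun F hF c hc y hy x hx => ?_⟩
  have m1 : ∀ z, stp c (z - y) ≤ F z := by
    intro z
    unfold stp
    split_ifs with hz
    · exact hy z (by linarith)
    · exact (hF.2 z).1
  have hsy : MemPsi (fun z => stp c (z - y)) :=
    ⟨fun p q h => (stp_psi hc).1 (by linarith), fun z => (stp_psi hc).2 _⟩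
  have m2 := conv_mono_fun hω hsy hF m1 x
  rw [conv_shift] at m2
  have m3 := conv_mono hω (stp_psi hc) (by linarith : s ≤ x - y)
  have m4 : conv (stp c) ω s = c * conv (stp 1) ω s := by
    unfold conv
    rw [← integral_const_mul]
    congr 1; ext z; unfold stp; split_ifs <;> simp
  have : c * (1 - κ) ≤ c * conv (stp 1) ω s := mul_le_mul_of_nonneg_left hs1.le hc.1
  nlinarith [hc.1, hc.2]

def itA (ω hf hg : ℝ → ℝ) (a b κ : ℝ) : ℕ → ℝ → ℝ
  | 0 => stp a
  | n + 1 => fun x => max (stp a x)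
      (ee hf a (conv (fun y => ee hg b (conv (itA ω hf hg a b κ n) ω y - κ)) ω x - κ))

lemma ee_psi {h : ℝ → ℝ} (hh : MemX h) {c : ℝ} (hc : c ∈ Icc (0:ℝ) 1) {F : ℝ → ℝ} (hF : Monotone F)
    (κ : ℝ) : MemPsi (fun y => ee h c (F y - κ)) :=
  ⟨fun x y hxy => ee_mono hh hc.1 (by linarith [hF hxy]),
   fun x => ⟨(ee_mem hh hc.1 _).1, (ee_mem hh hc.1 _).2.trans hc.2⟩⟩

lemma itA_psi {ω : ℝ → ℝ} {C : ℝ} (hω : Ker ω C) {hf hg : ℝ → ℝ} (hhf : MemX hf) (hhg : MemX hg)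
    {a b : ℝ} (ha : a ∈ Icc (0:ℝ) 1) (hb : b ∈ Icc (0:ℝ) 1) (κ : ℝ) (n : ℕ) :
    MemPsi (itA ω hf hg a b κ n) ∧ ∀ x, itA ω hf hg a b κ n x ≤ a := by
  induction n with
  | zero =>
    refine ⟨stp_psi ha, fun x => ?_⟩
    simp only [itA, stp]; split_ifs
    · exact le_rfl
    · exact ha.1
  | succ n ih =>
    have h1 := ee_psi hhg hb (conv_mono hω ih.1) κ
    have h2 := ee_psi hhf ha (conv_mono hω h1) κ
    have h3 := stp_psi ha
    refine ⟨⟨fun x y hxy => max_le_max (h3.1 hxy) (h2.1 hxy), fun x =>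
      ⟨le_max_of_le_left (h3.2 x).1, max_le (h3.2 x).2 (h2.2 x).2⟩⟩, fun x => max_le ?_ ?_⟩
    · simp only [stp]; split_ifs
      · exact le_rfl
      · exact ha.1
    · exact (ee_mem hhf ha.1 _).2

lemma itA_mono {ω : ℝ → ℝ} {C : ℝ} (hω : Ker ω C) {hf hg : ℝ → ℝ} (hhf : MemX hf) (hhg : MemX hg)
    {a b : ℝ} (ha : a ∈ Icc (0:ℝ) 1) (hb : b ∈ Icc (0:ℝ) 1) (κ : ℝ) (x : ℝ) :
    Monotone (fun n => itA ω hf hg a b κ n x) := by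
  have P := itA_psi hω hhf hhg ha hb κ
  have key : ∀ n x, itA ω hf hg a b κ n x ≤ itA ω hf hg a b κ (n + 1) x := by
    intro n
    induction n with
    | zero => intro x; exact le_max_left _ _
    | succ n ih =>
      intro x
      refine max_le_max le_rfl (ee_mono hhf ha.1 (sub_le_sub_right ?_ _))
      refine conv_mono_fun hω (ee_psi hhg hb (conv_mono hω (P n).1) κ)
        (ee_psi hhg hb (conv_mono hω (P (n+1)).1) κ) (fun y => ?_) x
      refine ee_mono hhg hb.1 (sub_le_sub_right ?_ _)
      exact conv_mono_fun hω (P n).1 (P (n+1)).1 ih y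
  exact monotone_nat_of_le_succ fun n => key n x

lemma seq_sup {A : ℕ → ℝ → ℝ} {a : ℝ} (ha : a ∈ Icc (0:ℝ) 1) (hA : ∀ n, MemPsi (A n))
    (hAa : ∀ n x, A n x ≤ a) (hm : ∀ x, Monotone (fun n => A n x)) :
    ∃ F : ℝ → ℝ, MemPsi F ∧ (∀ x, F x ≤ a) ∧ (∀ n x, A n x ≤ F x) ∧
      ∀ x, Tendsto (fun n => A n x) atTop (nhds (F x)) := by
  have bd : ∀ x, BddAbove (range fun n => A n x) := fun x => ⟨a, by
    rintro _ ⟨n, rfl⟩; exact hAa n x⟩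
  have hle : ∀ x, (⨆ n, A n x) ≤ a := fun x => ciSup_le fun n => hAa n x
  refine ⟨fun x => ⨆ n, A n x, ⟨fun x y hxy => ciSup_mono (bd y) fun n => (hA n).1 hxy, fun x =>
    ⟨((hA 0).2 x).1.trans (le_ciSup (bd x) 0), (hle x).trans ha.2⟩⟩, hle,
    fun n x => le_ciSup (bd x) n, fun x => tendsto_atTop_ciSup (hm x) (bd x)⟩

/-- The monotone auxiliary iteration converges to the top state. -/
lemma itA_tendsto {ω : ℝ → ℝ} {C : ℝ} (hω : Ker ω C) {hf hg Hf Hg : ℝ → ℝ} (hhf : MemX hf)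
    (hhg : MemX hg) (hHf : HPot hf Hf) (hHg : HPot hg Hg) {κ a b : ℝ} (hκ : 0 < κ)
    (ha : a ∈ Icc (0:ℝ) 1) (hb : b ∈ Icc (0:ℝ) 1)
    (mini : ∀ u ∈ Icc 0 b, ∀ v ∈ Icc 0 a, Hg b + Hf a - b * a + 4 * κ * (b + a) ≤
      Hg u + Hf v - u * v + 4 * κ * (u + v))
    (topg : ∀ q, a - 4 * κ < q → ee hg b q = b) :
    ∀ x, Tendsto (fun n => itA ω hf hg a b κ n x) atTop (nhds a) ∧
      Tendsto (fun n => ee hg b (conv (itA ω hf hg a b κ n) ω x - κ)) atTop (nhds b) := by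
  set A := itA ω hf hg a b κ with hA
  have P := itA_psi hω hhf hhg ha hb κ
  have M := itA_mono hω hhf hhg ha hb κ
  rw [← hA] at P M
  have Q : ∀ n, MemPsi (fun x => ee hg b (conv (A n) ω x - κ)) := fun n =>
    ee_psi hhg hb (conv_mono hω (P n).1) κ
  obtain ⟨F, hF, hFa, hAF, tF⟩ := seq_sup ha (fun n => (P n).1) (fun n => (P n).2) M
  obtain ⟨G, hG, hGb, hBG, tG⟩ := seq_sup hb Q (fun n x => (ee_mem hhg hb.1 _).2)
    (fun x n k hnk => ee_mono hhg hb.1 (sub_le_sub_right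
      (conv_mono_fun hω (P n).1 (P k).1 (fun y => M y hnk) x) _))
  have cF := conv_tendsto_seq hω (fun n => (P n).1) tF
  have cG := conv_tendsto_seq hω Q tG
  have st : ∀ x, 0 ≤ x → F x = a := by
    intro x hx
    refine le_antisymm (hFa x) (le_trans ?_ (hAF 0 x))
    simp [hA, itA, stp, hx]
  have fin := super hω hHf hHg (κ := 2 * κ) (a := a) (b := b) (by linarith) ha hb ?_ hF hG hFa hGb
    ?_ ?_ ?_ ?_
  · intro x
    have h1 := tF x
    have h2 := tG x
    rw [(fin x).1] at h1
    rw [(fin x).2] at h2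
    exact ⟨h1, h2⟩
  · intro u hu v hv h
    have := mini u hu v hv
    have h3 : κ * (b + a) ≤ κ * (u + v) := by linarith
    have h4 := le_of_mul_le_mul_left h3 hκ
    constructor <;> linarith [hu.2, hv.2]
  · refine tendsto_const_nhds.congr' ?_
    filter_upwards [eventually_ge_atTop 0] with x hx
    exact (st x hx).symm
  · refine tendsto_const_nhds.congr' ?_
    have t := conv_tendsto_top hω (stp_psi ha) (stp_top a)
    filter_upwards [t.eventually (lt_mem_nhds (by linarith : a - κ < a))] with x hx
    refine le_antisymm ?_ (hGb x)
    have h1 := hBG 0 x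
    have h2 : ee hg b (conv (A 0) ω x - κ) = b := by
      apply topg
      have : conv (A 0) ω x = conv (stp a) ω x := rfl
      rw [this]; linarith
    rwa [h2] at h1
  · intro x
    obtain ⟨n, hn⟩ := ((cG x).eventually
      (lt_mem_nhds (by linarith : conv G ω x - κ < conv G ω x))).exists
    refine le_trans (ee_mono hhf ha.1 ?_) ((le_max_right _ _).trans (hAF (n + 1) x))
    have : conv G ω x - 2 * κ ≤ conv (fun x => ee hg b (conv (A n) ω x - κ)) ω x - κ := by linarith
    exact this
  · intro x
    obtain ⟨n, hn⟩ := ((cF x).eventually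
      (lt_mem_nhds (by linarith : conv F ω x - κ < conv F ω x))).exists
    exact le_trans (ee_mono hhg hb.1 (by linarith)) (hBG n x)

lemma op_psi {ω : ℝ → ℝ} {C : ℝ} (hω : Ker ω C) {h : ℝ → ℝ} (hh : MemX h) {F : ℝ → ℝ}
    (hF : MemPsi F) : MemPsi (fun x => h (conv F ω x)) := by
  have := conv_psi hω hF
  exact ⟨fun x y hxy => hh.1 (this.2 x) (this.2 y) (this.1 hxy), fun x => hh.2 (this.2 x)⟩

lemma iter {ω : ℝ → ℝ} {C : ℝ} (hω : Ker ω C) {hf hg Hf Hg : ℝ → ℝ} (hhf : MemX hf)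
    (hhg : MemX hg) (hHf : HPot hf Hf) (hHg : HPot hg Hg) {κ a b : ℝ} (hκ : 0 < κ)
    (ha : a ∈ Icc (0:ℝ) 1) (hb : b ∈ Icc (0:ℝ) 1)
    (mini : ∀ u ∈ Icc 0 b, ∀ v ∈ Icc 0 a, Hg b + Hf a - b * a + 4 * κ * (b + a) ≤
      Hg u + Hf v - u * v + 4 * κ * (u + v))
    {f g : ℕ → ℝ → ℝ} (hf0 : MemPsi (f 0))
    (hrecg : ∀ t x, g t x = hg (conv (f t) ω x))
    (hrecf : ∀ t x, f (t + 1) x = hf (conv (g t) ω x))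
    {X : ℝ} (hX : ∀ x, X ≤ x → a ≤ f 0 x) (x η : ℝ) (hη : 0 < η) :
    ∀ᶠ t in atTop, a - η ≤ f t x ∧ b - η ≤ g t x := by
  have topg : ∀ q, a - 4 * κ < q → ee hg b q = b := fun q hq =>
    ee_top hhg hHg hκ ha hb (fun u hu => by
      have := mini u hu a ⟨ha.1, le_rfl⟩; nlinarith) hq
  have topf : ∀ q, b - 4 * κ < q → ee hf a q = a := fun q hq =>
    ee_top hhf hHf hκ hb ha (fun v hv => by
      have := mini b ⟨hb.1, le_rfl⟩ v hv; nlinarith) hq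
  have conv' := itA_tendsto hω hhf hhg hHf hHg hκ ha hb mini topg
  set A := itA ω hf hg a b κ with hA
  have P := itA_psi hω hhf hhg ha hb κ
  have M := itA_mono hω hhf hhg ha hb κ
  rw [← hA] at P M
  have egt : ∀ t, g t = fun x => hg (conv (f t) ω x) := fun t => funext (hrecg t)
  have eft : ∀ t, f (t+1) = fun x => hf (conv (g t) ω x) := fun t => funext (hrecf t)
  have fpsi : ∀ t, MemPsi (f t) := by
    intro t
    induction t with
    | zero => exact hf0
    | succ t ih =>
      rw [eft, egt]; exact op_psi hω hhf (op_psi hω hhg ih)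
  obtain ⟨s, hs, slack⟩ := conv_slack hω hκ
  -- one step of the true recursion on functions close to the top state
  have step : ∀ F, MemPsi F → ∀ y, (∀ x, y ≤ x → a - κ ≤ F x) → ∀ x, y + 2 * s ≤ x →
      a ≤ hf (conv (fun z => hg (conv F ω z)) ω x) := by
    intro F hF y hy x hx
    have hG := op_psi hω hhg hF
    have h1 : ∀ z, y + s ≤ z → b ≤ hg (conv F ω z) := by
      intro z hz
      have h2 : a - 2 * κ ≤ conv F ω z := by
        by_cases hak : 0 ≤ a - κ
        · have := slack F hF (a - κ) ⟨hak, by linarith [ha.2]⟩ y hy z hz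
          linarith
        · push Not at hak
          linarith [conv_nonneg hω hF z]
      rw [← topg (conv F ω z) (by linarith)]
      exact ee_le hhg le_rfl ((conv_psi hω hF).2 z)
    have h3 := slack _ hG b hb (y + s) h1 x (by linarith)
    rw [← topf (conv (fun z => hg (conv F ω z)) ω x) (by linarith)]
    conv_lhs => rw [topf _ (by linarith), ← topf (conv (fun z => hg (conv F ω z)) ω x) (by linarith)]
    exact ee_le hhf le_rfl ((conv_psi hω hG).2 x)
  obtain ⟨n, hn⟩ := ((conv' (-(2 * s))).1.eventually
    (lt_mem_nhds (by linarith : a - κ < a))).exists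
  have stepA : ∀ k, n ≤ k → ∀ x, 0 ≤ x → a ≤ hf (conv (fun z => hg (conv (A k) ω z)) ω x) := by
    intro k hk x hx
    refine step (A k) (P k).1 (-(2 * s)) (fun z hz => ?_) x (by linarith)
    have h1 := M (-(2 * s)) hk
    have h2 := (P k).1.1 hz
    simp only at h1
    linarith
  have early : ∀ j : ℕ, ∀ x, X + 2 * s * j ≤ x → a ≤ f j x := by
    intro j
    induction j with
    | zero => intro x hx; exact hX x (by simpa using hx)
    | succ j ih =>
      intro x hx
      push_cast at hx
      rw [eft, egt]
      exact step (f j) (fpsi j) (X + 2 * s * j) (fun z hz => by linarith [ih z hz]) x (by linarith)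
  set Y := X + 2 * s * n with hY
  have early' : ∀ j : ℕ, j ≤ n → ∀ x, Y ≤ x → a ≤ f j x := by
    intro j hj x hx
    refine early j x (le_trans ?_ hx)
    have : (j : ℝ) ≤ n := by exact_mod_cast hj
    rw [hY]
    have := mul_le_mul_of_nonneg_left this (by linarith : 0 ≤ 2 * s)
    linarith
  have stpcmp : ∀ (F : ℝ → ℝ), MemPsi F → (∀ x, Y ≤ x → a ≤ F x) → ∀ x, stp a (x - Y) ≤ F x := by
    intro F hF h x
    unfold stp
    split_ifs with hx
    · exact h x (by linarith)
    · exact (hF.2 x).1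
  have shpsi : ∀ k, MemPsi (fun x => A k (x - Y)) := fun k =>
    ⟨fun p q h => (P k).1.1 (by linarith), fun z => (P k).1.2 _⟩
  have gcmp : ∀ k, (∀ x, A k (x - Y) ≤ f k x) → ∀ x, hg (conv (A k) ω (x - Y)) ≤ g k x := by
    intro k ih x
    rw [egt, ← conv_shift (A k) ω Y x]
    exact hhg.1 ((conv_psi hω (shpsi k)).2 x) ((conv_psi hω (fpsi k)).2 x)
      (conv_mono_fun hω (shpsi k) (fpsi k) ih x)
  have main : ∀ k x, A k (x - Y) ≤ f k x := by
    intro k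
    induction k with
    | zero => exact stpcmp (f 0) hf0 (early' 0 (Nat.zero_le _))
    | succ k ih =>
      intro x
      have hg1 := gcmp k ih
      have hGk := op_psi hω hhg (P k).1
      have hgk : MemPsi (g k) := by rw [egt]; exact op_psi hω hhg (fpsi k)
      have hGs : MemPsi (fun x => hg (conv (A k) ω (x - Y))) :=
        ⟨fun p q h => hGk.1 (by linarith), fun z => hGk.2 _⟩
      have h2 : hf (conv (fun z => hg (conv (A k) ω z)) ω (x - Y)) ≤ f (k + 1) x := by
        rw [eft, ← conv_shift (fun z => hg (conv (A k) ω z)) ω Y x]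
        exact hhf.1 ((conv_psi hω hGs).2 x) ((conv_psi hω hgk).2 x)
          (conv_mono_fun hω hGs hgk hg1 x)
      refine max_le ?_ ?_
      · by_cases hk : k + 1 ≤ n
        · exact stpcmp _ (fpsi _) (early' _ hk) x
        · refine stpcmp _ (fpsi _) (fun z hz => ?_) x
          have h3 := stepA k (by omega) (z - Y) (by linarith)
          refine h3.trans ?_
          rw [eft, ← conv_shift (fun z => hg (conv (A k) ω z)) ω Y z]
          exact hhf.1 ((conv_psi hω hGs).2 z) ((conv_psi hω hgk).2 z)
            (conv_mono_fun hω hGs hgk hg1 z)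
      · refine le_trans (ee_le hhf ?_ ((conv_psi hω hGk).2 (x - Y))) h2
        have := conv_mono_fun hω (ee_psi hhg hb (conv_mono hω (P k).1) κ) hGk
          (fun y => ee_le hhg (by linarith) ((conv_psi hω (P k).1).2 y)) (x - Y)
        linarith
  have e1 := (conv' (x - Y)).1.eventually (lt_mem_nhds (by linarith : a - η < a))
  have e2 := (conv' (x - Y)).2.eventually (lt_mem_nhds (by linarith : b - η < b))
  filter_upwards [e1, e2] with t h1 h2
  refine ⟨h1.le.trans (main t x), h2.le.trans (le_trans ?_ (gcmp t (main t) x))⟩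
  exact ee_le hhg (by linarith) ((conv_psi hω (P t).1).2 _)

lemma rec_psi {ω : ℝ → ℝ} {C : ℝ} (hω : Ker ω C) {hf hg : ℝ → ℝ} (hhf : MemX hf)
    (hhg : MemX hg) {f g : ℕ → ℝ → ℝ} (hf0 : MemPsi (f 0))
    (hrecg : ∀ t x, g t x = hg (conv (f t) ω x))
    (hrecf : ∀ t x, f (t + 1) x = hf (conv (g t) ω x)) (t : ℕ) :
    MemPsi (f t) ∧ MemPsi (g t) := by
  have egt : ∀ t, g t = fun x => hg (conv (f t) ω x) := fun t => funext (hrecg t)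
  have eft : ∀ t, f (t+1) = fun x => hf (conv (g t) ω x) := fun t => funext (hrecf t)
  have fpsi : ∀ t, MemPsi (f t) := by
    intro t
    induction t with
    | zero => exact hf0
    | succ t ih =>
      rw [eft, egt]; exact op_psi hω hhf (op_psi hω hhg ih)
  exact ⟨fpsi t, by rw [egt]; exact op_psi hω hhg (fpsi t)⟩

lemma core {ω : ℝ → ℝ} {C : ℝ} (hω : Ker ω C) {hf hg Hf Hg : ℝ → ℝ} (hhf : MemX hf)
    (hhg : MemX hg) (hHf : HPot hf Hf) (hHg : HPot hg Hg) {u' v' : ℝ}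
    (hu' : u' ∈ Icc (0:ℝ) 1) (hv' : v' ∈ Icc (0:ℝ) 1)
    (strict : ∀ u ∈ Icc 0 u', ∀ v ∈ Icc 0 v', Hg u + Hf v - u * v ≤
      Hg u' + Hf v' - u' * v' → u = u' ∧ v = v')
    {f g : ℕ → ℝ → ℝ} (hf0 : MemPsi (f 0)) (htop : v' ≤ sSup (Set.range (f 0)))
    (hrecg : ∀ t x, g t x = hg (conv (f t) ω x))
    (hrecf : ∀ t x, f (t + 1) x = hf (conv (g t) ω x)) (x η : ℝ) (hη : 0 < η) :
    ∀ᶠ t in atTop, v' - η ≤ f t x ∧ u' - η ≤ g t x := by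
  rcases hv'.1.eq_or_lt with h0 | hpos
  · subst h0
    have h1 := strict 0 ⟨le_rfl, hu'.1⟩ 0 ⟨le_rfl, le_rfl⟩ (by
      have := hHg.k0 0 u' le_rfl hu'.1 hu'.2
      linarith)
    refine Eventually.of_forall fun t => ?_
    have := rec_psi hω hhf hhg hf0 hrecg hrecf t
    rw [← h1.1]
    constructor
    · linarith [(this.1.2 x).1]
    · linarith [(this.2.2 x).1]
  set Φ : ℝ × ℝ → ℝ := fun p => Hg p.1 + Hf p.2 - p.1 * p.2 with hΦ
  have hcont : ContinuousOn Φ (Icc 0 1 ×ˢ Icc 0 1) := by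
    refine ContinuousOn.sub (ContinuousOn.add ?_ ?_) (by fun_prop)
    · exact hHg.cont.comp continuousOn_fst fun p hp => hp.1
    · exact hHf.cont.comp continuousOn_snd fun p hp => hp.2
  obtain ⟨γ, hγ, hgap⟩ : ∃ γ > 0, ∀ u ∈ Icc 0 u', ∀ v ∈ Icc 0 v',
      (u ≤ u' - η / 2 ∨ v ≤ v' - η / 2) → Φ (u', v') + γ ≤ Φ (u, v) := by
    set S : Set (ℝ × ℝ) := (Icc 0 u' ×ˢ Icc 0 v') ∩ {p | p.1 ≤ u' - η / 2 ∨ p.2 ≤ v' - η / 2}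
    have hS : IsCompact S := by
      refine (isCompact_Icc.prod isCompact_Icc).inter_right ?_
      exact (isClosed_le continuous_fst continuous_const).union
        (isClosed_le continuous_snd continuous_const)
    have hSs : S ⊆ Icc 0 1 ×ˢ Icc 0 1 := fun p hp =>
      ⟨⟨hp.1.1.1, hp.1.1.2.trans hu'.2⟩, ⟨hp.1.2.1, hp.1.2.2.trans hv'.2⟩⟩
    rcases S.eq_empty_or_nonempty with he | hne
    · refine ⟨1, one_pos, fun u hu v hv h => ?_⟩
      have : (u, v) ∈ S := ⟨⟨hu, hv⟩, h⟩
      rw [he] at this; exact this.elim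
    · obtain ⟨p, hp, hpm⟩ := hS.exists_isMinOn hne (hcont.mono hSs)
      refine ⟨Φ p - Φ (u', v'), ?_, fun u hu v hv h => ?_⟩
      · by_contra hcon
        push Not at hcon
        have h1 := strict p.1 hp.1.1 p.2 hp.1.2 (by simp only [hΦ] at hcon; linarith)
        rcases hp.2 with h2 | h2
        · linarith [h1.1]
        · linarith [h1.2]
      · have : Φ p ≤ Φ (u, v) := hpm (show (u, v) ∈ S from ⟨⟨hu, hv⟩, h⟩)
        linarith
  set ε := min v' (γ / 4) with hε
  have hε0 : 0 < ε := lt_min hpos (by linarith)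
  have hεv : ε ≤ v' := min_le_left _ _
  have hεγ : ε ≤ γ / 4 := min_le_right _ _
  set κ := γ / 32 with hκ
  have hκ0 : 0 < κ := by positivity
  have hBs : Icc 0 u' ×ˢ Icc 0 (v' - ε) ⊆ (Icc 0 1 ×ˢ Icc 0 1 : Set (ℝ × ℝ)) := fun p hp =>
      ⟨⟨hp.1.1, hp.1.2.trans hu'.2⟩, ⟨hp.2.1, hp.2.2.trans (by linarith [hv'.2])⟩⟩
  obtain ⟨p, hp, hpm⟩ := (isCompact_Icc.prod isCompact_Icc : IsCompact
    (Icc 0 u' ×ˢ Icc 0 (v' - ε))).exists_isMinOn ⟨(u', v' - ε), ⟨hu'.1, le_rfl⟩,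
      ⟨by linarith, le_rfl⟩⟩ (f := fun p => Φ p + 4 * κ * (p.1 + p.2))
      ((hcont.mono hBs).add (by fun_prop))
  obtain ⟨b, a⟩ := p
  have hb : b ∈ Icc 0 u' := hp.1
  have ha : a ∈ Icc 0 (v' - ε) := hp.2
  have hmin : ∀ u ∈ Icc 0 u', ∀ v ∈ Icc 0 (v' - ε), Φ (b, a) + 4 * κ * (b + a) ≤
      Φ (u, v) + 4 * κ * (u + v) := fun u hu v hv =>
    hpm (show (u, v) ∈ Icc 0 u' ×ˢ Icc 0 (v' - ε) from ⟨hu, hv⟩)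
  have hclose : ¬ (b ≤ u' - η / 2 ∨ a ≤ v' - η / 2) := by
    intro hcon
    have h1 := hgap b hb a ⟨ha.1, by linarith [ha.2]⟩ hcon
    have h2 := hmin u' ⟨hu'.1, le_rfl⟩ (v' - ε) ⟨by linarith, le_rfl⟩
    have h3 : Φ (u', v' - ε) ≤ Φ (u', v') + ε := by
      have := hHf.k0 (v' - ε) v' (by linarith) (by linarith) hv'.2
      simp only [hΦ]
      nlinarith [hu'.2]
    have h4 : 4 * κ * (u' + (v' - ε)) ≤ 4 * κ * 2 := by
      apply mul_le_mul_of_nonneg_left _ (by positivity)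
      linarith [hu'.2, hv'.2]
    have h5 : 0 ≤ 4 * κ * (b + a) := mul_nonneg (by positivity) (add_nonneg hb.1 ha.1)
    rw [hκ] at *
    linarith
  push Not at hclose
  obtain ⟨_, ⟨X, rfl⟩, hX⟩ := exists_lt_of_lt_csSup (range_nonempty (f 0))
    (lt_of_lt_of_le (by linarith [ha.2] : a < v') htop)
  have := iter hω hhf hhg hHf hHg hκ0 (a := a) (b := b) ⟨ha.1, by linarith [ha.2, hv'.2]⟩
    ⟨hb.1, hb.2.trans hu'.2⟩ (fun u hu v hv => hmin u ⟨hu.1, hu.2.trans hb.2⟩ v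
      ⟨hv.1, hv.2.trans ha.2⟩) hf0 hrecg hrecf (X := X) (fun x hx => hX.le.trans (hf0.1 hx))
      x (η / 2) (by linarith)
  filter_upwards [this] with t ht
  constructor
  · linarith [ht.1, hclose.2]
  · linarith [ht.2, hclose.1]

lemma xinv_bdd (h : ℝ → ℝ) (w : ℝ) :
    BddBelow ({1} ∪ {u ∈ Icc (0:ℝ) 1 | w ≤ h u}) := by
  refine ⟨0, ?_⟩
  rintro u (hu | hu)
  · rw [mem_singleton_iff] at hu; rw [hu]; exact zero_le_one
  · exact hu.1.1

lemma xinv_mono (h : ℝ → ℝ) : Monotone (Xinv h) := by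
  intro v w hvw
  refine csInf_le_csInf (xinv_bdd h v) ⟨1, Or.inl rfl⟩ ?_
  exact union_subset_union_right _ fun u hu => ⟨hu.1, hvw.trans hu.2⟩

lemma xinv_hpot {h : ℝ → ℝ} (hh : MemX h) : HPot h (fun v => ∫ x in (0:ℝ)..v, Xinv h x) := by
  have ii : ∀ a b : ℝ, IntervalIntegrable (Xinv h) volume a b := fun a b =>
    (xinv_mono h).intervalIntegrable
  have e : ∀ v w : ℝ, (∫ x in (0:ℝ)..w, Xinv h x) - (∫ x in (0:ℝ)..v, Xinv h x) =
      ∫ x in v..w, Xinv h x := fun v w =>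
    intervalIntegral.integral_interval_sub_left (ii _ _) (ii _ _)
  have lo : ∀ c v w : ℝ, v ≤ w → (∀ x ∈ Ioo v w, c ≤ Xinv h x) →
      c * (w - v) ≤ ∫ x in v..w, Xinv h x := by
    intro c v w hvw hc
    have := intervalIntegral.integral_mono_on_of_le_Ioo hvw
      (_root_.intervalIntegrable_const (c := c)) (ii v w) hc
    rw [intervalIntegral.integral_const, smul_eq_mul] at this
    linarith
  have hi : ∀ c v w : ℝ, v ≤ w → (∀ x ∈ Ioo v w, Xinv h x ≤ c) →
      ∫ x in v..w, Xinv h x ≤ c * (w - v) := by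
    intro c v w hvw hc
    have := intervalIntegral.integral_mono_on_of_le_Ioo hvw
      (ii v w) (_root_.intervalIntegrable_const (c := c)) hc
    rw [intervalIntegral.integral_const, smul_eq_mul] at this
    linarith
  constructor
  · intro v w _ hvw _
    simp only [e]
    have := lo 0 v w hvw (fun x _ => le_csInf ⟨1, Or.inl rfl⟩ (by
      rintro u (hu | hu)
      · rw [mem_singleton_iff] at hu; rw [hu]; exact zero_le_one
      · exact hu.1.1))
    linarith
  · intro v w _ hvw _
    simp only [e]
    have := hi 1 v w hvw (fun x _ => csInf_le (xinv_bdd h x) (Or.inl rfl))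
    linarith
  · intro q v w hq0 hq1 hv hvw hw hqv
    simp only [e]
    refine lo q v w hvw (fun x hx => le_csInf ⟨1, Or.inl rfl⟩ ?_)
    rintro u (hu | hu)
    · rw [mem_singleton_iff] at hu; rw [hu]; exact hq1
    · by_contra hcon
      push Not at hcon
      have := hh.1 hu.1 ⟨hq0, hq1⟩ hcon.le
      linarith [hu.2, hx.1]
  · intro q v w hq0 hq1 hv hvw hw hqv
    simp only [e]
    exact hi q v w hvw (fun x hx => csInf_le (xinv_bdd h x)
      (Or.inr ⟨⟨hq0, hq1⟩, hx.2.le.trans hqv⟩))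

lemma half_cross {h H : ℝ → ℝ} (hh : MemX h) (hH : HPot h H) {u v : ℝ} (hu : u ∈ Icc (0:ℝ) 1)
    (hv : v ∈ Icc (0:ℝ) 1) (mini : ∀ p ∈ Icc (0:ℝ) 1, H u - u * v ≤ H p - p * v) :
    u ∈ Icc (lm h v) (rm h v) := by
  constructor
  · unfold lm
    split_ifs with h0
    · exact hu.1
    · push Not at h0
      refine csSup_le ⟨h 0, 0, ⟨le_rfl, h0⟩, rfl⟩ ?_
      rintro _ ⟨w, hw, rfl⟩
      by_contra hcon
      push Not at hcon
      have hw1 : w ∈ Icc (0:ℝ) 1 := ⟨hw.1, hw.2.le.trans hv.2⟩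
      have h1 := hH.k2 w u (h w) hw1.1 hw1.2 hu.1 hcon.le (hh.2 hw1).2 le_rfl
      have h2 := mini (h w) (hh.2 hw1)
      nlinarith [hw.2]
  · unfold rm
    split_ifs with h0
    · exact hu.2
    · push Not at h0
      refine le_csInf ⟨h 1, 1, ⟨h0, le_rfl⟩, rfl⟩ ?_
      rintro _ ⟨w, hw, rfl⟩
      by_contra hcon
      push Not at hcon
      have hw1 : w ∈ Icc (0:ℝ) 1 := ⟨hv.1.trans hw.1.le, hw.2⟩
      have h1 := hH.k1 w (h w) u hw1.1 hw1.2 (hh.2 hw1).1 hcon.le hu.2 le_rfl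
      have h2 := mini (h w) (hh.2 hw1)
      nlinarith [hw.1]

lemma HPot.rfl' {h H : ℝ → ℝ} (hH : HPot h H) :
    HPot (fun q => 1 - h (1 - q)) (fun v => H (1 - v) + v) := by
  constructor
  · intro v w h1 h2 h3
    have := hH.k0' (1 - w) (1 - v) (by linarith) (by linarith) (by linarith)
    linarith
  · intro v w h1 h2 h3
    have := hH.k0 (1 - w) (1 - v) (by linarith) (by linarith) (by linarith)
    linarith
  · intro q v w h1 h2 h3 h4 h5 h6
    have := hH.k2 (1 - q) (1 - w) (1 - v) (by linarith) (by linarith) (by linarith)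
      (by linarith) (by linarith) (by linarith)
    linarith
  · intro q v w h1 h2 h3 h4 h5 h6
    have := hH.k1 (1 - q) (1 - w) (1 - v) (by linarith) (by linarith) (by linarith)
      (by linarith) (by linarith) (by linarith)
    linarith

lemma memX_rfl {h : ℝ → ℝ} (hh : MemX h) : MemX (fun q => 1 - h (1 - q)) := by
  have m : ∀ q ∈ Icc (0:ℝ) 1, 1 - q ∈ Icc (0:ℝ) 1 := fun q hq =>
    ⟨by linarith [hq.2], by linarith [hq.1]⟩
  refine ⟨fun p hp q hq hpq => ?_, fun q hq => m _ (hh.2 (m q hq))⟩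
  have := hh.1 (m q hq) (m p hp) (by linarith)
  simp only; linarith

lemma conv_rfl {ω : ℝ → ℝ} {C : ℝ} (hω : Ker ω C) {F : ℝ → ℝ} (hF : MemPsi F) (x : ℝ) :
    conv (fun y => 1 - F (-y)) ω x = 1 - conv F ω (-x) := by
  have h1 : conv F ω (-x) = ∫ z, F (-(x - z)) * ω z := by
    rw [conv_eq, ← integral_neg_eq_self]
    congr 1; ext z; rw [hω.even]; congr 2; ring
  have h2 : Integrable (fun z => F (-(x - z)) * ω z) := by
    have := (conv_int hω hF (-x)).comp_neg
    refine this.congr (Eventually.of_forall fun z => ?_)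
    simp only [hω.even]; congr 2; ring
  rw [h1, conv_eq]
  conv_rhs => rw [← hω.one]
  rw [← integral_sub hω.int h2]
  congr 1; ext z; ring

/-- **General continuum convergence.** Here `m` is the (attained) minimum of the
potential over `[0,1]²`, and `(u′,v′)`, `(u″,v″)` are the componentwise smallest and
largest crossing points realizing this minimum. -/
theorem general_continuum_convergence
    (ω hf hg : ℝ → ℝ)
    (hω : IsAveragingKernel ω) (hreg : IsRegularKernel ω)
    (hhf : MemX hf) (hhg : MemX hg)
    (m : ℝ)
    (hm : IsLeast ((fun p : ℝ × ℝ => Pot hf hg p.1 p.2) '' (Icc 0 1 ×ˢ Icc 0 1)) m)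
    (u' v' u'' v'' : ℝ)
    (hmin : IsCrossing hf hg u' v' ∧ Pot hf hg u' v' = m ∧
      ∀ u v, IsCrossing hf hg u v → Pot hf hg u v = m → u' ≤ u ∧ v' ≤ v)
    (hmax : IsCrossing hf hg u'' v'' ∧ Pot hf hg u'' v'' = m ∧
      ∀ u v, IsCrossing hf hg u v → Pot hf hg u v = m → u ≤ u'' ∧ v ≤ v'')
    (f g : ℕ → ℝ → ℝ)
    (hf0 : MemPsi (f 0))
    (hbot : sInf (Set.range (f 0)) ≤ v'') (htop : v' ≤ sSup (Set.range (f 0)))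
    (hrecg : ∀ t x, g t x = hg (conv (f t) ω x))
    (hrecf : ∀ t x, f (t + 1) x = hf (conv (g t) ω x)) :
    ∀ x : ℝ,
      v' ≤ Filter.liminf (fun t => f t x) Filter.atTop ∧
      u' ≤ Filter.liminf (fun t => g t x) Filter.atTop ∧
      Filter.limsup (fun t => f t x) Filter.atTop ≤ v'' ∧
      Filter.limsup (fun t => g t x) Filter.atTop ≤ u'' := by
  obtain ⟨ev, nn, bv, hi, h1⟩ := hω
  have K : Ker ω (ω 0 + (eVariationOn ω univ).toReal) := by
    refine ⟨ev, nn, hi, h1, fun x => ?_⟩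
    have := bv.sub_le (mem_univ x) (mem_univ 0)
    linarith
  have hHf := xinv_hpot hhf
  have hHg := xinv_hpot hhg
  have hmle : ∀ p ∈ Icc (0:ℝ) 1, ∀ q ∈ Icc (0:ℝ) 1, m ≤ Pot hf hg p q := fun p hp q hq =>
    hm.2 ⟨(p, q), ⟨hp, hq⟩, rfl⟩
  have hcross : ∀ u ∈ Icc (0:ℝ) 1, ∀ v ∈ Icc (0:ℝ) 1, Pot hf hg u v ≤ m →
      IsCrossing hf hg u v ∧ Pot hf hg u v = m := by
    intro u hu v hv h
    refine ⟨⟨hu, hv, half_cross hhg hHg hu hv fun p hp => ?_,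
      half_cross hhf hHf hv hu fun q hq => ?_⟩, le_antisymm h (hmle u hu v hv)⟩
    · have := h.trans (hmle p hp v hv)
      unfold Pot at this; linarith
    · have := h.trans (hmle u hu q hq)
      unfold Pot at this; linarith
  obtain ⟨⟨hu1, hv1, _⟩, hm1, hmin⟩ := hmin
  obtain ⟨⟨hu2, hv2, _⟩, hm2, hmax⟩ := hmax
  have psi := rec_psi K hhf hhg hf0 hrecg hrecf
  have A := core K hhf hhg hHf hHg hu1 hv1 (fun u hu v hv h => by
    obtain ⟨c1, c2⟩ := hcross u ⟨hu.1, hu.2.trans hu1.2⟩ v ⟨hv.1, hv.2.trans hv1.2⟩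
      (by rw [← hm1]; exact h)
    have := hmin u v c1 c2
    exact ⟨le_antisymm hu.2 this.1, le_antisymm hv.2 this.2⟩) hf0 htop hrecg hrecf
  have B := core K (memX_rfl hhf) (memX_rfl hhg) hHf.rfl' hHg.rfl'
    (u' := 1 - u'') (v' := 1 - v'')
    ⟨by linarith [hu2.2], by linarith [hu2.1]⟩ ⟨by linarith [hv2.2], by linarith [hv2.1]⟩
    (fun u hu v hv h => by
      obtain ⟨c1, c2⟩ := hcross (1 - u) ⟨by linarith [hu.2, hu2.1], by linarith [hu.1]⟩
        (1 - v) ⟨by linarith [hv.2, hv2.1], by linarith [hv.1]⟩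
        (by
          rw [← hm2]
          simp only [sub_sub_cancel] at h
          unfold Pot
          linarith)
      have := hmax (1 - u) (1 - v) c1 c2
      constructor
      · linarith [this.1, hu.2]
      · linarith [this.2, hv.2])
    (f := fun t x => 1 - f t (-x)) (g := fun t x => 1 - g t (-x))
    ⟨fun x y hxy => by
        have := hf0.1 (by linarith : -y ≤ -x)
        simp only; linarith,
      fun x => ⟨by linarith [(hf0.2 (-x)).2], by linarith [(hf0.2 (-x)).1]⟩⟩
    (by
      have bd : BddAbove (range (fun x => 1 - f 0 (-x))) := ⟨1, by
        rintro _ ⟨x, rfl⟩; simp only; linarith [(hf0.2 (-x)).1]⟩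
      have : 1 - sSup (range (fun x => 1 - f 0 (-x))) ≤ sInf (range (f 0)) := by
        refine le_csInf (range_nonempty _) ?_
        rintro _ ⟨y, rfl⟩
        have := le_csSup bd ⟨-y, rfl⟩
        simp only [neg_neg] at this
        linarith
      linarith)
    (fun t x => by
      simp only [conv_rfl K (psi t).1 x, sub_sub_cancel]
      rw [hrecg])
    (fun t x => by
      simp only [conv_rfl K (psi t).2 x, sub_sub_cancel]
      rw [hrecf])
  have li : ∀ (φ : ℕ → ℝ) (c : ℝ), (∀ t, φ t ∈ Icc (0:ℝ) 1) →
      (∀ η > 0, ∀ᶠ t in atTop, c - η ≤ φ t) → c ≤ Filter.liminf φ Filter.atTop := by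
    intro φ c hφ h
    refine le_of_forall_sub_le fun η hη => ?_
    exact le_liminf_of_le (isBoundedUnder_of ⟨1, fun t => (hφ t).2⟩).isCoboundedUnder_ge (h η hη)
  have ls : ∀ (φ : ℕ → ℝ) (c : ℝ), (∀ t, φ t ∈ Icc (0:ℝ) 1) →
      (∀ η > 0, ∀ᶠ t in atTop, φ t ≤ c + η) → Filter.limsup φ Filter.atTop ≤ c := by
    intro φ c hφ h
    refine le_of_forall_pos_le_add fun η hη => ?_
    exact limsup_le_of_le (isBoundedUnder_of ⟨0, fun t => (hφ t).1⟩).isCoboundedUnder_le (h η hη)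
  intro x
  refine ⟨li _ _ (fun t => (psi t).1.2 x) fun η hη => (A x η hη).mono fun t h => h.1,
    li _ _ (fun t => (psi t).2.2 x) fun η hη => (A x η hη).mono fun t h => h.2,
    ls _ _ (fun t => (psi t).1.2 x) fun η hη => (B (-x) η hη).mono fun t h => ?_,
    ls _ _ (fun t => (psi t).2.2 x) fun η hη => (B (-x) η hη).mono fun t h => ?_⟩
  · have := h.1
    simp only [neg_neg] at this
    linarith
  · have := h.2
    simp only [neg_neg] at this
    linarith
end
end

section
/- Discrete spatial convergence. Let ω be a regular averaging kernel with Δ-discretization ω̂, and let (hf, hg) ∈ 𝒳² satisfy the strictly positive gap condition. Assume Δ < |A(hf, hg)|/‖ω‖∞. Initialize the discrete spatially coupled recursion with f⁰ the restriction to the lattice {x_i = iΔ} of any (0,1)-interpolating function in Ψ. If A(hf, hg) > 0 then f^t(x_i) → 0 as t → ∞ for every i; if A(hf, hg) < 0 then f^t(x_i) → 1 as t → ∞ for every i. -/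
open MeasureTheory Filter Set

noncomputable section

/-- The `Δ`-discretization `ω̂ᵢ = ∫_{(i−1/2)Δ}^{(i+1/2)Δ} ω(z) dz` of a kernel. -/
def dker (ω : ℝ → ℝ) (Δ : ℝ) (i : ℤ) : ℝ :=
  ∫ z in (((i : ℝ) - 1/2) * Δ)..(((i : ℝ) + 1/2) * Δ), ω z

/-- Discrete convolution `(f ⊗ ω̂)(xᵢ) = Σⱼ ω̂_{i−j} f(xⱼ)`. -/
def dconv (f : ℤ → ℝ) (ωh : ℤ → ℝ) (i : ℤ) : ℝ := ∑' j : ℤ, ωh (i - j) * f j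

structure GInv (h p : ℝ → ℝ) : Prop where
  mono : MonotoneOn p (Icc 0 1)
  maps : MapsTo p (Icc 0 1) (Icc 0 1)
  le_of : ∀ x ∈ Icc (0:ℝ) 1, ∀ u ∈ Icc (0:ℝ) 1, x < h u → p x ≤ u
  ge_of : ∀ x ∈ Icc (0:ℝ) 1, ∀ u ∈ Icc (0:ℝ) 1, h u < x → u ≤ p x

def RR (h : ℝ → ℝ) (v u : ℝ) : Prop := ∀ y ∈ Icc (0:ℝ) 1, v < y → u ≤ h y
def LL (h : ℝ → ℝ) (v u : ℝ) : Prop := ∀ y ∈ Icc (0:ℝ) 1, y < v → h y ≤ u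

def JJ (p : ℝ → ℝ) (u : ℝ) : ℝ := ∫ x in (0:ℝ)..u, p x

def PP (pf pg : ℝ → ℝ) (u v : ℝ) : ℝ := JJ pg u + JJ pf v - u * v

lemma gi_int {h p : ℝ → ℝ} (H : GInv h p) {a b : ℝ} (ha : a ∈ Icc (0:ℝ) 1) (hb : b ∈ Icc (0:ℝ) 1) :
    IntervalIntegrable p volume a b := by
  apply MonotoneOn.intervalIntegrable
  exact H.mono.mono (uIcc_subset_Icc ha hb)

lemma JJ_sub {h p : ℝ → ℝ} (H : GInv h p) {a b : ℝ} (ha : a ∈ Icc (0:ℝ) 1) (hb : b ∈ Icc (0:ℝ) 1) :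
    JJ p b - JJ p a = ∫ x in a..b, p x := by
  have h0 : (0:ℝ) ∈ Icc (0:ℝ) 1 := by simp
  unfold JJ
  rw [intervalIntegral.integral_interval_sub_left (gi_int H h0 hb) (gi_int H h0 ha)]

lemma JJ_le {h p : ℝ → ℝ} (H : GInv h p) {a b c : ℝ} (ha : a ∈ Icc (0:ℝ) 1) (hb : b ∈ Icc (0:ℝ) 1)
    (hab : a ≤ b) (hc : ∀ x ∈ Ioo a b, p x ≤ c) : JJ p b - JJ p a ≤ c * (b - a) := by
  rw [JJ_sub H ha hb]
  have := intervalIntegral.integral_mono_on_of_le_Ioo hab (gi_int H ha hb)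
    (intervalIntegrable_const (c := c)) hc
  simpa [mul_comm] using this

lemma JJ_ge {h p : ℝ → ℝ} (H : GInv h p) {a b c : ℝ} (ha : a ∈ Icc (0:ℝ) 1) (hb : b ∈ Icc (0:ℝ) 1)
    (hab : a ≤ b) (hc : ∀ x ∈ Ioo a b, c ≤ p x) : c * (b - a) ≤ JJ p b - JJ p a := by
  rw [JJ_sub H ha hb]
  have := intervalIntegral.integral_mono_on_of_le_Ioo hab
    (intervalIntegrable_const (c := c)) (gi_int H ha hb) hc
  simpa [mul_comm] using this

lemma JJ_zero (p : ℝ → ℝ) : JJ p 0 = 0 := by simp [JJ]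

lemma JJ_mono {h p : ℝ → ℝ} (H : GInv h p) : MonotoneOn (JJ p) (Icc 0 1) := by
  intro a ha b hb hab
  have := JJ_ge (c := 0) H ha hb hab (fun x hx => (H.maps ⟨ha.1.trans hx.1.le, hx.2.le.trans hb.2⟩).1)
  linarith

lemma JJ_cont {h p : ℝ → ℝ} (H : GInv h p) : ContinuousOn (JJ p) (Icc 0 1) := by
  have : LipschitzOnWith 1 (JJ p) (Icc 0 1) := by
    apply LipschitzOnWith.of_le_add
    intro a ha b hb
    rcases le_total a b with hab | hab
    · have := JJ_mono H ha hb hab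
      have := dist_nonneg (x := a) (y := b)
      linarith
    · have := JJ_le (c := 1) H hb ha hab
        (fun x hx => (H.maps ⟨hb.1.trans hx.1.le, hx.2.le.trans ha.2⟩).2)
      rw [Real.dist_eq, abs_of_nonneg (by linarith)]
      linarith
  exact this.continuousOn

lemma crit {h p : ℝ → ℝ} (H : GInv h p) (hh : MapsTo h (Icc 0 1) (Icc 0 1))
    {u0 v0 u v : ℝ} (hu0 : u0 ∈ Icc (0:ℝ) 1) (hu : u ∈ Icc u0 1) (hv : v0 ≤ v)
    (hR : RR h v0 u0) (hmin : ∀ x ∈ Icc u0 1, JJ p u - u * v ≤ JJ p x - x * v) :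
    RR h v u ∧ LL h v u := by
  have hu' : u ∈ Icc (0:ℝ) 1 := ⟨hu0.1.trans hu.1, hu.2⟩
  constructor
  · intro y hy hvy
    by_contra! hlt
    have h1 : u0 ≤ h y := hR y hy (hv.trans_lt hvy)
    have h2 := hmin (h y) ⟨h1, (hh hy).2⟩
    have h3 := JJ_ge (c := y) H (hh hy) hu' hlt.le (fun x hx =>
      H.ge_of x ⟨(hh hy).1.trans hx.1.le, hx.2.le.trans hu'.2⟩ y hy hx.1)
    nlinarith [mul_pos (sub_pos.2 hvy) (sub_pos.2 hlt)]
  · intro y hy hvy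
    by_contra! hlt
    have h2 := hmin (h y) ⟨hu.1.trans hlt.le, (hh hy).2⟩
    have h3 := JJ_le (c := y) H hu' (hh hy) hlt.le (fun x hx =>
      H.le_of x ⟨hu'.1.trans hx.1.le, hx.2.le.trans (hh hy).2⟩ y hy hx.2)
    nlinarith [mul_pos (sub_pos.2 hvy) (sub_pos.2 hlt)]

structure SubPt (hf hg : ℝ → ℝ) (u v : ℝ) : Prop where
  hu : u ∈ Icc (0:ℝ) 1
  hv : v ∈ Icc (0:ℝ) 1
  rg : RR hg v u
  rf : RR hf u v

lemma exists_cross {hf hg pf pg : ℝ → ℝ} (Hf : GInv hf pf) (Hg : GInv hg pg)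
    (hhf : MapsTo hf (Icc 0 1) (Icc 0 1)) (hhg : MapsTo hg (Icc 0 1) (Icc 0 1))
    {u0 v0 : ℝ} (S : SubPt hf hg u0 v0) :
    ∃ u v, SubPt hf hg u v ∧ LL hg v u ∧ LL hf u v ∧ u0 ≤ u ∧ v0 ≤ v ∧
      PP pf pg u v ≤ PP pf pg u0 v0 := by
  have hc : ContinuousOn (fun z : ℝ × ℝ => PP pf pg z.1 z.2) (Icc u0 1 ×ˢ Icc v0 1) := by
    unfold PP
    refine ContinuousOn.sub (ContinuousOn.add ?_ ?_) (by fun_prop)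
    · exact (JJ_cont Hg).comp continuousOn_fst (fun z hz => ⟨S.hu.1.trans hz.1.1, hz.1.2⟩)
    · exact (JJ_cont Hf).comp continuousOn_snd (fun z hz => ⟨S.hv.1.trans hz.2.1, hz.2.2⟩)
  obtain ⟨⟨u, v⟩, ⟨hu, hv⟩, hmin⟩ := (isCompact_Icc.prod isCompact_Icc).exists_isMinOn
    ⟨(u0, v0), ⟨⟨le_rfl, S.hu.2⟩, ⟨le_rfl, S.hv.2⟩⟩⟩ hc
  simp only at hu hv
  have hm : ∀ x ∈ Icc u0 1, ∀ y ∈ Icc v0 1, PP pf pg u v ≤ PP pf pg x y := fun x hx y hy =>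
    hmin (show (x, y) ∈ Icc u0 1 ×ˢ Icc v0 1 from ⟨hx, hy⟩)
  have c1 := crit Hg hhg S.hu hu hv.1 S.rg (fun x hx => by
    have := hm x hx v hv
    unfold PP at this; linarith)
  have c2 := crit Hf hhf S.hv hv hu.1 S.rf (fun y hy => by
    have := hm u hu y hy
    unfold PP at this; linarith)
  exact ⟨u, v, ⟨⟨S.hu.1.trans hu.1, hu.2⟩, ⟨S.hv.1.trans hv.1, hv.2⟩, c1.1, c2.1⟩, c1.2, c2.2,
    hu.1, hv.1, hm u0 ⟨le_rfl, S.hu.2⟩ v0 ⟨le_rfl, S.hv.2⟩⟩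

lemma inv_le_of_RR {h p : ℝ → ℝ} (H : GInv h p) {v u x : ℝ} (hv : 0 ≤ v) (hu : u ≤ 1)
    (hR : RR h v u) (hx : 0 ≤ x) (hxu : x < u) : p x ≤ v := by
  have hx1 : x ∈ Icc (0:ℝ) 1 := ⟨hx, hxu.le.trans hu⟩
  rcases le_or_gt 1 v with h1 | h1
  · exact (H.maps hx1).2.trans h1
  · apply le_of_forall_gt_imp_ge_of_dense
    intro y hy
    rcases le_or_gt 1 y with h2 | h2
    · exact (H.maps hx1).2.trans h2
    · have hyI : y ∈ Icc (0:ℝ) 1 := ⟨hv.trans hy.le, h2.le⟩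
      exact H.le_of x hx1 y hyI (hxu.trans_le (hR y hyI hy))

lemma PP_le_of_sub {hf hg pf pg : ℝ → ℝ} (Hf : GInv hf pf) (Hg : GInv hg pg)
    {u v : ℝ} (S : SubPt hf hg u v) : PP pf pg u v ≤ u * v := by
  have h0 : (0:ℝ) ∈ Icc (0:ℝ) 1 := by simp
  have h1 := JJ_le Hg h0 S.hu S.hu.1 (fun x hx =>
    inv_le_of_RR Hg S.hv.1 S.hu.2 S.rg hx.1.le hx.2)
  have h2 := JJ_le Hf h0 S.hv S.hv.1 (fun x hx =>
    inv_le_of_RR Hf S.hu.1 S.hv.2 S.rf hx.1.le hx.2)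
  rw [JJ_zero] at h1 h2
  unfold PP
  linarith

/-- telescoping -/
lemma tele_s4 {a : ℤ → ℝ} (ha : Monotone a) {m M : ℝ} (hm : Tendsto a atBot (nhds m))
    (hM : Tendsto a atTop (nhds M)) : HasSum (fun i => a i - a (i - 1)) (M - m) := by
  have e : M - m = (M - a (-1)) + (a (-1) - m) := by ring
  rw [e]
  apply HasSum.of_nat_of_neg_add_one
  · rw [hasSum_iff_tendsto_nat_of_nonneg (fun n => sub_nonneg.2 (ha (by lia)))]
    have : ∀ n : ℕ, ∑ i ∈ Finset.range n, (a (i:ℤ) - a ((i:ℤ) - 1)) = a ((n:ℤ) - 1) - a (-1) := by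
      intro n
      induction n with
      | zero => simp
      | succ n ih => rw [Finset.sum_range_succ, ih]; push_cast; simp
    simp_rw [this]
    apply Tendsto.sub_const
    exact hM.comp (tendsto_atTop_add_const_right _ (-1) tendsto_natCast_atTop_atTop)
  · rw [hasSum_iff_tendsto_nat_of_nonneg (fun n => sub_nonneg.2 (ha (by lia)))]
    have : ∀ n : ℕ, ∑ i ∈ Finset.range n, (a (-((i:ℤ) + 1)) - a (-((i:ℤ)+1) - 1))
        = a (-1) - a (-((n:ℤ) + 1)) := by
      intro n
      induction n with
      | zero => simp
      | succ n ih =>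
        rw [Finset.sum_range_succ, ih]; push_cast
        rw [show -((n:ℤ) + 1) - 1 = -((n:ℤ) + 1 + 1) by ring]; ring
    simp_rw [this]
    apply Tendsto.const_sub
    apply hm.comp
    apply tendsto_neg_atTop_atBot.comp
    exact (tendsto_atTop_add_const_right _ (1) tendsto_natCast_atTop_atTop)

structure Wt (w : ℤ → ℝ) : Prop where
  nn : ∀ i, 0 ≤ w i
  ev : ∀ i, w (-i) = w i
  sm : HasSum w 1

lemma shift_sum {w : ℤ → ℝ} {s : ℝ} (h : HasSum w s) (i : ℤ) : HasSum (fun j => w (i - j)) s :=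
  (Equiv.subLeft i).hasSum_iff.2 h

lemma dc_sum {w f : ℤ → ℝ} (W : Wt w) (hf : ∀ i, f i ∈ Icc (0:ℝ) 1) (i : ℤ) :
    Summable (fun j => w (i - j) * f j) := by
  refine Summable.of_nonneg_of_le (fun j => mul_nonneg (W.nn _) (hf j).1) (fun j => ?_)
    (shift_sum W.sm i).summable
  exact mul_le_of_le_one_right (W.nn _) (hf j).2

lemma dc_le {w f g : ℤ → ℝ} (W : Wt w) (hf : ∀ i, f i ∈ Icc (0:ℝ) 1)
    (hg : ∀ i, g i ∈ Icc (0:ℝ) 1) (hfg : ∀ i, f i ≤ g i) (i : ℤ) : dconv f w i ≤ dconv g w i :=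
  Summable.tsum_le_tsum (fun j => mul_le_mul_of_nonneg_left (hfg j) (W.nn _))
    (dc_sum W hf i) (dc_sum W hg i)

lemma dc_const {w : ℤ → ℝ} (W : Wt w) (c : ℝ) (i : ℤ) : dconv (fun _ => c) w i = c := by
  unfold dconv
  rw [tsum_mul_right, (shift_sum W.sm i).tsum_eq, one_mul]

lemma dc_mem {w f : ℤ → ℝ} (W : Wt w) (hf : ∀ i, f i ∈ Icc (0:ℝ) 1) (i : ℤ) :
    dconv f w i ∈ Icc (0:ℝ) 1 := by
  constructor
  · exact tsum_nonneg (fun j => mul_nonneg (W.nn _) (hf j).1)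
  · have := dc_le (g := fun _ => 1) W hf (by simp) (fun j => (hf j).2) i
    rwa [dc_const W] at this

lemma dc_shift (w f : ℤ → ℝ) (i k : ℤ) : dconv f w (i + k) = dconv (fun j => f (j + k)) w i := by
  unfold dconv
  rw [← (Equiv.addRight k).tsum_eq]
  simp

lemma dc_eq (w f : ℤ → ℝ) (i : ℤ) : dconv f w i = ∑' n, w n * f (i - n) := by
  unfold dconv
  rw [← (Equiv.subLeft i).tsum_eq]
  simp

lemma dc_mono {w f : ℤ → ℝ} (W : Wt w) (hf : ∀ i, f i ∈ Icc (0:ℝ) 1) (hm : Monotone f) :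
    Monotone (dconv f w) := by
  intro i j hij
  have e : j = i + (j - i) := by ring
  rw [e, dc_shift]
  exact dc_le W hf (fun _ => hf _) (fun k => hm (by linarith)) i

lemma dc_tendsto {ι : Type*} {l : Filter ι} {w : ℤ → ℝ} (W : Wt w) {f : ι → ℤ → ℝ} {F : ℤ → ℝ}
    (hf : ∀ k i, f k i ∈ Icc (0:ℝ) 1) (h : ∀ i, Tendsto (fun k => f k i) l (nhds (F i))) (i : ℤ) :
    Tendsto (fun k => dconv (f k) w i) l (nhds (dconv F w i)) := by
  unfold dconv
  apply tendsto_tsum_of_dominated_convergence (shift_sum W.sm i).summable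
  · intro j
    exact (h j).const_mul _
  · refine Eventually.of_forall (fun k j => ?_)
    rw [Real.norm_of_nonneg (mul_nonneg (W.nn _) (hf k j).1)]
    exact mul_le_of_le_one_right (W.nn _) (hf k j).2
structure SubSol (hf hg : ℝ → ℝ) (w f g : ℤ → ℝ) : Prop where
  fm : Monotone f
  gm : Monotone g
  fI : ∀ i, f i ∈ Icc (0:ℝ) 1
  gI : ∀ i, g i ∈ Icc (0:ℝ) 1
  rf : ∀ i, RR hf (dconv g w i) (f i)
  rg : ∀ i, RR hg (dconv f w i) (g i)

lemma wsum {w d : ℤ → ℝ} {k : ℤ → ℤ → ℝ} {s t : ℝ} (hw : HasSum w s) (hd : HasSum d t)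
    (w0 : ∀ i, 0 ≤ w i) (d0 : ∀ i, 0 ≤ d i) (hk : ∀ i n, k i n ∈ Icc (0:ℝ) 1) :
    Summable (Function.uncurry fun i n => w n * (k i n * d i)) := by
  have h1 : Summable (fun z : ℤ × ℤ => d z.1 * w z.2) :=
    hd.summable.mul_of_nonneg hw.summable d0 w0
  refine Summable.of_nonneg_of_le (fun z => ?_) (fun z => ?_) h1
  · exact mul_nonneg (w0 _) (mul_nonneg (hk _ _).1 (d0 _))
  · have := mul_le_of_le_one_left (d0 z.1) (hk z.1 z.2).2
    have := mul_le_mul_of_nonneg_left this (w0 z.2)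
    simp only [Function.uncurry]
    linarith

lemma JJ_part {h p : ℝ → ℝ} (H : GInv h p) {w f g : ℤ → ℝ} (W : Wt w) (fm : Monotone f)
    (fI : ∀ i, f i ∈ Icc (0:ℝ) 1) (gI : ∀ i, g i ∈ Icc (0:ℝ) 1)
    (rf : ∀ i, RR h (dconv g w i) (f i)) {v : ℝ} (hv : v ∈ Icc (0:ℝ) 1)
    (f0 : Tendsto f atBot (nhds 0)) (f1 : Tendsto f atTop (nhds v)) :
    JJ p v ≤ ∑' n, w n * ∑' i, g (i - n) * (f i - f (i - 1)) ∧
    Summable (fun n => w n * ∑' i, g (i - n) * (f i - f (i - 1))) := by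
  have Hd := tele_s4 fm f0 f1
  rw [sub_zero] at Hd
  have d0 : ∀ i, 0 ≤ f i - f (i - 1) := fun i => sub_nonneg.2 (fm (by lia))
  have tJ : ∀ {l : Filter ℤ} {x : ℝ}, x ∈ Icc (0:ℝ) 1 → Tendsto f l (nhds x) →
      Tendsto (fun i => JJ p (f i)) l (nhds (JJ p x)) := by
    intro l x hx ht
    exact (JJ_cont H x hx).tendsto.comp
      (tendsto_nhdsWithin_iff.2 ⟨ht, Eventually.of_forall fI⟩)
  have HJ := tele_s4 (a := fun i => JJ p (f i)) (fun i j hij => JJ_mono H (fI i) (fI j) (fm hij))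
    (tJ (by simp) f0) (tJ hv f1)
  rw [JJ_zero, sub_zero] at HJ
  have hs := wsum (k := fun i n => g (i - n)) W.sm Hd W.nn d0 (fun i n => gI _)
  have e : ∀ i, dconv g w i * (f i - f (i - 1)) = ∑' n, w n * (g (i - n) * (f i - f (i - 1))) := by
    intro i
    rw [dc_eq, ← tsum_mul_right]
    exact tsum_congr (fun n => by ring)
  have e2 : ∀ n, w n * ∑' i, g (i - n) * (f i - f (i - 1)) =
      ∑' i, w n * (g (i - n) * (f i - f (i - 1))) := fun n => tsum_mul_left.symm
  constructor
  · rw [← HJ.tsum_eq]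
    simp_rw [e2]
    rw [hs.tsum_comm]
    refine Summable.tsum_le_tsum (fun i => ?_) HJ.summable hs.prod
    rw [← e]
    exact JJ_le H (fI _) (fI _) (fm (by lia)) (fun x hx =>
      inv_le_of_RR H (dc_mem W gI i).1 (fI i).2 (rf i) ((fI _).1.trans hx.1.le) hx.2)
  · simp_rw [e2]
    exact hs.prod_symm.prod

lemma energy {hf hg pf pg : ℝ → ℝ} (Hf : GInv hf pf) (Hg : GInv hg pg) {w f g : ℤ → ℝ}
    (W : Wt w) {M : ℝ} (hM : ∀ i, w i ≤ M) (S : SubSol hf hg w f g) {u v : ℝ}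
    (hu : u ∈ Icc (0:ℝ) 1) (hv : v ∈ Icc (0:ℝ) 1)
    (f0 : Tendsto f atBot (nhds 0)) (f1 : Tendsto f atTop (nhds v))
    (g0 : Tendsto g atBot (nhds 0)) (g1 : Tendsto g atTop (nhds u)) :
    PP pf pg u v ≤ M * (u * v) := by
  obtain ⟨a1, a2⟩ := JJ_part Hf W S.fm S.fI S.gI S.rf hv f0 f1
  obtain ⟨b1, b2⟩ := JJ_part Hg W S.gm S.gI S.fI S.rg hu g0 g1
  have df := tele_s4 S.fm f0 f1
  have dg := tele_s4 S.gm g0 g1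
  rw [sub_zero] at df dg
  have df0 : ∀ i, 0 ≤ f i - f (i - 1) := fun i => sub_nonneg.2 (S.fm (by lia))
  have dg0 : ∀ i, 0 ≤ g i - g (i - 1) := fun i => sub_nonneg.2 (S.gm (by lia))
  have dgs : ∀ n, HasSum (fun i => g (i - n) - g (i - n - 1)) u := fun n =>
    (Equiv.subRight n).hasSum_iff.2 dg
  -- reindex the second sum
  have re : ∀ n, (w (-n) * ∑' i, f (i - (-n)) * (g i - g (i - 1)))
      = w n * ∑' i, f i * (g (i - n) - g (i - n - 1)) := by
    intro n
    rw [W.ev, ← (Equiv.subRight n).tsum_eq]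
    simp
  have b1' : JJ pg u ≤ ∑' n, w n * ∑' i, f i * (g (i - n) - g (i - n - 1)) := by
    rw [← (Equiv.neg ℤ).tsum_eq] at b1
    simpa only [Equiv.neg_apply, re] using b1
  have b2' : Summable (fun n => w n * ∑' i, f i * (g (i - n) - g (i - n - 1))) := by
    rw [← (Equiv.neg ℤ).summable_iff] at b2
    simpa only [Function.comp_def, Equiv.neg_apply, re] using b2
  -- the inner sums
  have sx : ∀ n, Summable (fun i => g (i - n) * (f i - f (i - 1))) := fun n =>
    Summable.of_nonneg_of_le (fun i => mul_nonneg (S.gI _).1 (df0 i))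
      (fun i => mul_le_of_le_one_left (df0 i) (S.gI _).2) df.summable
  have sy : ∀ n, Summable (fun i => f i * (g (i - n) - g (i - n - 1))) := fun n =>
    Summable.of_nonneg_of_le (fun i => mul_nonneg (S.fI _).1 (dg0 _))
      (fun i => mul_le_of_le_one_left (dg0 _) (S.fI _).2) (dgs n).summable
  have sc : ∀ n, Summable (fun i => (f i - f (i - 1)) * (g (i - n) - g (i - n - 1))) := fun n =>
    Summable.of_nonneg_of_le (fun i => mul_nonneg (df0 _) (dg0 _))
      (fun i => mul_le_of_le_one_left (dg0 _) (by linarith [(S.fI i).2, (S.fI (i-1)).1]))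
      (dgs n).summable
  have key : ∀ n, (∑' i, g (i - n) * (f i - f (i - 1))) +
      (∑' i, f i * (g (i - n) - g (i - n - 1))) =
      u * v + ∑' i, (f i - f (i - 1)) * (g (i - n) - g (i - n - 1)) := by
    intro n
    have t1 : Tendsto (fun i : ℤ => i - n) atBot atBot :=
      tendsto_atBot_add_const_right _ (-n) tendsto_id
    have t2 : Tendsto (fun i : ℤ => i - n) atTop atTop :=
      tendsto_atTop_add_const_right _ (-n) tendsto_id
    have T := tele_s4 (a := fun i => g (i - n) * f i)
      (fun i j hij => mul_le_mul (S.gm (by lia)) (S.fm hij) (S.fI _).1 (S.gI _).1)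
      ((g0.comp t1).mul f0) ((g1.comp t2).mul f1)
    rw [zero_mul, sub_zero] at T
    rw [← (sx n).tsum_add (sy n), ← T.tsum_eq, ← T.summable.tsum_add (sc n)]
    refine tsum_congr (fun i => ?_)
    rw [show i - 1 - n = i - n - 1 by ring]
    ring
  -- double sum of the correlation
  have hin : ∀ i, HasSum (fun n => (f i - f (i - 1)) * (g (i - n) - g (i - n - 1)))
      ((f i - f (i - 1)) * u) := fun i => (shift_sum dg i).mul_left _
  have hs : Summable (Function.uncurry fun i n =>
      (f i - f (i - 1)) * (g (i - n) - g (i - n - 1))) := by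
    apply (summable_prod_of_nonneg (fun z => mul_nonneg (df0 _) (dg0 _))).2
    refine ⟨fun i => (hin i).summable, ?_⟩
    simp only [Function.uncurry]
    simp_rw [(hin _).tsum_eq]
    exact df.summable.mul_right u
  have ctot : ∑' n, ∑' i, (f i - f (i - 1)) * (g (i - n) - g (i - n - 1)) = v * u := by
    rw [hs.tsum_comm]
    simp_rw [(hin _).tsum_eq]
    rw [tsum_mul_right, df.tsum_eq]
  have cs : Summable (fun n => ∑' i, (f i - f (i - 1)) * (g (i - n) - g (i - n - 1))) :=
    hs.prod_symm.prod
  have c0 : ∀ n, 0 ≤ ∑' i, (f i - f (i - 1)) * (g (i - n) - g (i - n - 1)) := fun n =>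
    tsum_nonneg (fun i => mul_nonneg (df0 _) (dg0 _))
  have hfin : (∑' n, w n * ∑' i, g (i - n) * (f i - f (i - 1))) +
      (∑' n, w n * ∑' i, f i * (g (i - n) - g (i - n - 1))) ≤ u * v + M * (v * u) := by
    rw [← a2.tsum_add b2', ← ctot, ← tsum_mul_left]
    conv_rhs => rw [show u * v = 1 * (u * v) by ring, ← W.sm.tsum_eq, ← tsum_mul_right]
    rw [← (W.sm.summable.mul_right _).tsum_add (cs.mul_left M)]
    refine Summable.tsum_le_tsum (fun n => ?_) (a2.add b2')
      ((W.sm.summable.mul_right _).add (cs.mul_left M))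
    rw [← mul_add, key, mul_add]
    have := mul_le_mul_of_nonneg_right (hM n) (c0 n)
    linarith
  unfold PP
  linarith

lemma sub_zero_or {hf hg pf pg : ℝ → ℝ} (Hf : GInv hf pf) (Hg : GInv hg pg)
    (hhf : MapsTo hf (Icc 0 1) (Icc 0 1)) (hhg : MapsTo hg (Icc 0 1) (Icc 0 1)) {A : ℝ}
    (hA : ∀ u v, SubPt hf hg u v → LL hg v u → LL hf u v → ¬ (u = 0 ∧ v = 0) → A ≤ PP pf pg u v)
    {u v : ℝ} (S : SubPt hf hg u v) : (u = 0 ∧ v = 0) ∨ A ≤ PP pf pg u v := by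
  by_cases h : u = 0 ∧ v = 0
  · exact Or.inl h
  · right
    obtain ⟨u', v', S', l1, l2, hu, hv, hle⟩ := exists_cross Hf Hg hhf hhg S
    refine (hA u' v' S' l1 l2 ?_).trans hle
    rintro ⟨rfl, rfl⟩
    exact h ⟨le_antisymm hu S.hu.1, le_antisymm hv S.hv.1⟩

/-- hypotheses bundle -/
structure Hyp (hf hg pf pg : ℝ → ℝ) (w : ℤ → ℝ) (A M : ℝ) : Prop where
  W : Wt w
  Hf : GInv hf pf
  Hg : GInv hg pg
  mf : MemX hf
  mg : MemX hg
  hM : ∀ i, w i ≤ M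
  hMA : M < A
  hA : ∀ u v, SubPt hf hg u v → LL hg v u → LL hf u v → ¬ (u = 0 ∧ v = 0) → A ≤ PP pf pg u v

section
variable {hf hg pf pg : ℝ → ℝ} {w : ℤ → ℝ} {A M : ℝ}

lemma Hyp.M0 (H : Hyp hf hg pf pg w A M) : 0 ≤ M := (H.W.nn 0).trans (H.hM 0)

lemma Hyp.small (H : Hyp hf hg pf pg w A M) {u v : ℝ} (S : SubPt hf hg u v) (h : u * v < A) :
    u = 0 ∧ v = 0 := by
  rcases sub_zero_or H.Hf H.Hg H.mf.2 H.mg.2 H.hA S with h1 | h1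
  · exact h1
  · exact absurd (h1.trans (PP_le_of_sub H.Hf H.Hg S)) (not_le.2 h)

lemma lims {f : ℤ → ℝ} (fm : Monotone f) (fI : ∀ i, f i ∈ Icc (0:ℝ) 1) :
    ∃ a ∈ Icc (0:ℝ) 1, ∃ b ∈ Icc (0:ℝ) 1, Tendsto f atBot (nhds a) ∧ Tendsto f atTop (nhds b) ∧
      (∀ i, a ≤ f i) ∧ (∀ i, f i ≤ b) := by
  have bb : BddBelow (range f) := ⟨0, by rintro _ ⟨i, rfl⟩; exact (fI i).1⟩
  have ba : BddAbove (range f) := ⟨1, by rintro _ ⟨i, rfl⟩; exact (fI i).2⟩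
  have h1 := tendsto_atBot_ciInf fm bb
  have h2 := tendsto_atTop_ciSup fm ba
  exact ⟨_, isClosed_Icc.mem_of_tendsto h1 (Eventually.of_forall fI), _,
    isClosed_Icc.mem_of_tendsto h2 (Eventually.of_forall fI), h1, h2,
    fun i => ciInf_le bb i, fun i => le_ciSup ba i⟩

lemma dc_atBot (W : Wt w) {f : ℤ → ℝ} (fI : ∀ i, f i ∈ Icc (0:ℝ) 1) {a : ℝ}
    (h : Tendsto f atBot (nhds a)) : Tendsto (dconv f w) atBot (nhds a) := by
  have := dc_tendsto (l := atBot) W (f := fun k j => f (j + k)) (F := fun _ => a) (fun k i => fI _)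
    (fun i => h.comp (tendsto_atBot_add_const_left _ i tendsto_id)) 0
  rw [dc_const W] at this
  refine this.congr (fun k => ?_)
  rw [← dc_shift, zero_add]

lemma rr_bot (W : Wt w) {h : ℝ → ℝ} {f g : ℤ → ℝ} (gI : ∀ i, g i ∈ Icc (0:ℝ) 1)
    (rf : ∀ i, RR h (dconv g w i) (f i)) {a b : ℝ} (hb : Tendsto g atBot (nhds b))
    (ha : ∀ i, a ≤ f i) : RR h b a := by
  intro y hy hby
  obtain ⟨i, hi⟩ := ((dc_atBot W gI hb).eventually_lt_const hby).exists
  exact (ha i).trans (rf i y hy hi)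

lemma rr_top (W : Wt w) {h : ℝ → ℝ} {f g : ℤ → ℝ} (gI : ∀ i, g i ∈ Icc (0:ℝ) 1)
    (rf : ∀ i, RR h (dconv g w i) (f i)) {a b : ℝ} (hbI : b ∈ Icc (0:ℝ) 1) (hb : ∀ i, g i ≤ b)
    (ha : Tendsto f atTop (nhds a)) : RR h b a := by
  intro y hy hby
  refine le_of_tendsto ha (Eventually.of_forall fun i => rf i y hy (lt_of_le_of_lt ?_ hby))
  have := dc_le (g := fun _ => b) W gI (fun _ => hbI) hb i
  rwa [dc_const W] at this

lemma Hyp.vanish (H : Hyp hf hg pf pg w A M) {f g : ℤ → ℝ} (S : SubSol hf hg w f g)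
    (hη : ∃ i, f i < A) : (∀ i, f i = 0) ∧ (∀ i, g i = 0) := by
  obtain ⟨a, aI, v, vI, fa, fv, al, vl⟩ := lims S.fm S.fI
  obtain ⟨b, bI, u, uI, gb, gu, bl, ul⟩ := lims S.gm S.gI
  have S0 : SubPt hf hg b a := ⟨bI, aI, rr_bot H.W S.fI S.rg fa bl, rr_bot H.W S.gI S.rf gb al⟩
  obtain ⟨i, hi⟩ := hη
  obtain ⟨rfl, rfl⟩ := H.small S0 (lt_of_le_of_lt
    ((mul_le_of_le_one_left aI.1 bI.2).trans (al i)) hi)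
  have S1 : SubPt hf hg u v := ⟨uI, vI, rr_top H.W S.fI S.rg vI vl gu,
    rr_top H.W S.gI S.rf uI ul fv⟩
  have E := energy H.Hf H.Hg H.W H.hM S uI vI fa fv gb gu
  rcases sub_zero_or H.Hf H.Hg H.mf.2 H.mg.2 H.hA S1 with ⟨rfl, rfl⟩ | h1
  · exact ⟨fun i => le_antisymm (vl i) (al i), fun i => le_antisymm (ul i) (bl i)⟩
  · exfalso
    have : M * (u * v) ≤ M := mul_le_of_le_one_right H.M0 (mul_le_one₀ uI.2 vI.1 vI.2)
    linarith [H.hMA]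

lemma Hyp.limit (H : Hyp hf hg pf pg w A M) {l : Filter ℕ} [l.NeBot] {P P' Q e : ℕ → ℤ → ℝ}
    {p q : ℤ → ℝ} (Pm : ∀ k, Monotone (P k)) (Qm : ∀ k, Monotone (Q k))
    (PI : ∀ k i, P k i ∈ Icc (0:ℝ) 1) (QI : ∀ k i, Q k i ∈ Icc (0:ℝ) 1)
    (tP : ∀ i, Tendsto (fun k => P k i) l (nhds (p i)))
    (tP' : ∀ i, Tendsto (fun k => P' k i) l (nhds (p i)))
    (tQ : ∀ i, Tendsto (fun k => Q k i) l (nhds (q i)))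
    (te : ∀ i, Tendsto (fun k => e k i) l (nhds 0))
    (hQ : ∀ k i, Q k i ≤ hg (dconv (P k) w i))
    (hP : ∀ k i, P' k i ≤ max (e k i) (hf (dconv (Q k) w i))) :
    SubSol hf hg w p q where
  fm := fun i j hij => le_of_tendsto_of_tendsto' (tP i) (tP j) (fun k => Pm k hij)
  gm := fun i j hij => le_of_tendsto_of_tendsto' (tQ i) (tQ j) (fun k => Qm k hij)
  fI := fun i => isClosed_Icc.mem_of_tendsto (tP i) (Eventually.of_forall fun k => PI k i)
  gI := fun i => isClosed_Icc.mem_of_tendsto (tQ i) (Eventually.of_forall fun k => QI k i)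
  rf := by
    intro i y hy hlt
    have h1 := (dc_tendsto H.W QI tQ i).eventually_lt_const hlt
    have h2 : Tendsto (fun k => max (e k i) (hf y)) l (nhds (max 0 (hf y))) :=
      (te i).max tendsto_const_nhds
    rw [max_eq_right (H.mf.2 hy).1] at h2
    refine le_of_tendsto_of_tendsto (tP' i) h2 (h1.mono fun k hk => ?_)
    exact (hP k i).trans (max_le_max le_rfl (H.mf.1 (dc_mem H.W (QI k) i) hy hk.le))
  rg := by
    intro i y hy hlt
    have h1 := (dc_tendsto H.W PI tP i).eventually_lt_const hlt
    refine le_of_tendsto (tQ i) (h1.mono fun k hk => ?_)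
    exact (hQ k i).trans (H.mg.1 (dc_mem H.W (PI k) i) hy hk.le)

end
lemma sup_mem {ι : Type*} {x : ι → ℝ} (h : ∀ j, x j ∈ Icc (0:ℝ) 1) : (⨆ j, x j) ∈ Icc (0:ℝ) 1 :=
  ⟨Real.iSup_nonneg fun j => (h j).1, Real.iSup_le (fun j => (h j).2) zero_le_one⟩

lemma le_sup1 {ι : Type*} {x : ι → ℝ} (h : ∀ j, x j ∈ Icc (0:ℝ) 1) (j : ι) : x j ≤ ⨆ j, x j :=
  le_ciSup (f := x) ⟨1, by rintro _ ⟨i, rfl⟩; exact (h i).2⟩ j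

lemma ultra_lim {U : Ultrafilter ℕ} {x : ℕ → ℝ} (h : ∀ j, x j ∈ Icc (0:ℝ) 1) :
    ∃ a, Tendsto x U (nhds a) := by
  obtain ⟨a, -, ha⟩ := isCompact_Icc.ultrafilter_le_nhds' (U.map x)
    (Ultrafilter.mem_map.2 (Filter.univ_mem' h))
  exact ⟨a, ha⟩

lemma Hyp.main {hf hg pf pg : ℝ → ℝ} {w : ℤ → ℝ} {A M : ℝ} (H : Hyp hf hg pf pg w A M)
    {f g : ℕ → ℤ → ℝ} (fm0 : Monotone (f 0)) (fI0 : ∀ i, f 0 i ∈ Icc (0:ℝ) 1)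
    (f00 : Tendsto (f 0) atBot (nhds 0))
    (h1 : ∀ t i, g t i = hg (dconv (f t) w i)) (h2 : ∀ t i, f (t + 1) i = hf (dconv (g t) w i))
    (i : ℤ) : Tendsto (fun t => f t i) atTop (nhds 0) := by
  have A0 : 0 < A := H.M0.trans_lt H.hMA
  have W := H.W
  have gg : ∀ t, (Monotone (f t) ∧ ∀ i, f t i ∈ Icc (0:ℝ) 1) →
      (Monotone (g t) ∧ ∀ i, g t i ∈ Icc (0:ℝ) 1) := by
    rintro t ⟨a, b⟩
    refine ⟨fun i j hij => ?_, fun i => ?_⟩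
    · rw [h1, h1]
      exact H.mg.1 (dc_mem W b _) (dc_mem W b _) (dc_mono W b a hij)
    · rw [h1]; exact H.mg.2 (dc_mem W b _)
  have ff : ∀ t, (Monotone (f t) ∧ ∀ i, f t i ∈ Icc (0:ℝ) 1) := by
    intro t
    induction t with
    | zero => exact ⟨fm0, fI0⟩
    | succ t ih =>
      obtain ⟨a, b⟩ := gg t ih
      refine ⟨fun i j hij => ?_, fun i => ?_⟩
      · rw [h2, h2]
        exact H.mf.1 (dc_mem W b _) (dc_mem W b _) (dc_mono W b a hij)
      · rw [h2]; exact H.mf.2 (dc_mem W b _)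
  have fm := fun t => (ff t).1
  have fI := fun t => (ff t).2
  have gm := fun t => (gg t (ff t)).1
  have gI := fun t => (gg t (ff t)).2
  have smono : ∀ {ι : Type} {F : ι → ℤ → ℝ}, (∀ j, Monotone (F j)) →
      (∀ j i, F j i ∈ Icc (0:ℝ) 1) → Monotone (fun i => ⨆ j, F j i) := by
    intro ι F Fm FI i i' hi
    exact Real.iSup_le (fun j => (Fm j hi).trans (le_sup1 (fun j => FI j i') j))
      (sup_mem fun j => FI j i').1
  by_cases hc : ∃ p, ∀ t, f t p ≤ A / 2
  · obtain ⟨p, hp⟩ := hc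
    have key : ∀ {x : ℕ → ℝ}, (∀ j, x j ∈ Icc (0:ℝ) 1) →
        ∃ a, Tendsto (fun k => ⨆ t : ℕ, x (t + k)) atTop (nhds a) := by
      intro x hx
      refine ⟨_, tendsto_atTop_ciInf ?_ ⟨0, ?_⟩⟩
      · intro k k' hk
        refine Real.iSup_le (fun t => ?_) (sup_mem fun j => hx _).1
        have := le_sup1 (x := fun t => x (t + k)) (fun j => hx _) (t + (k' - k))
        change x (t + (k' - k) + k) ≤ _ at this
        rwa [show t + (k' - k) + k = t + k' by lia] at this
      · rintro _ ⟨k, rfl⟩; exact (sup_mem fun j => hx _).1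
    choose P tP using fun i => key (fun j => fI j i)
    choose Q tQ using fun i => key (fun j => gI j i)
    have S := H.limit (l := atTop) (P := fun k i => ⨆ t : ℕ, f (t + k) i)
      (P' := fun k i => ⨆ t : ℕ, f (t + (k + 1)) i)
      (Q := fun k i => ⨆ t : ℕ, g (t + k) i) (e := fun _ _ => 0) (p := P) (q := Q)
      (fun k => smono (fun _ => fm _) (fun _ => fI _)) (fun k => smono (fun _ => gm _) (fun _ => gI _))
      (fun k i => sup_mem (fun j => fI _ _)) (fun k i => sup_mem (fun j => gI _ _))
      tP (fun i => (tP i).comp (tendsto_add_atTop_nat 1)) tQ (fun _ => tendsto_const_nhds)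
      (fun k i => by
        have m := dc_mem W (f := fun i => ⨆ t : ℕ, f (t + k) i) (fun i => sup_mem (fun j => fI _ _)) i
        refine Real.iSup_le (fun t => ?_) (H.mg.2 m).1
        rw [h1]
        exact H.mg.1 (dc_mem W (fI _) _) m (dc_le W (fI _) (fun i => sup_mem (fun j => fI _ _))
          (fun i => le_sup1 (x := fun t => f (t + k) i) (fun j => fI _ _) t) i))
      (fun k i => by
        have m := dc_mem W (f := fun i => ⨆ t : ℕ, g (t + k) i) (fun i => sup_mem (fun j => gI _ _)) i
        refine le_max_of_le_right (Real.iSup_le (fun t => ?_) (H.mf.2 m).1)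
        rw [← add_assoc, h2]
        exact H.mf.1 (dc_mem W (gI _) _) m (dc_le W (gI _) (fun i => sup_mem (fun j => gI _ _))
          (fun i => le_sup1 (x := fun t => g (t + k) i) (fun j => gI _ _) t) i))
    have hz := H.vanish S ⟨p, lt_of_le_of_lt (le_of_tendsto (tP p)
      (Eventually.of_forall fun k => Real.iSup_le (fun t => hp _) (by linarith))) (half_lt_self A0)⟩
    have := tP i
    rw [hz.1 i] at this
    refine squeeze_zero (fun t => (fI t i).1) (fun k => ?_) this
    simpa using le_sup1 (x := fun t => f (t + k) i) (fun j => fI _ _) 0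
  · exfalso
    push Not at hc
    have hn : ∀ k : ℕ, ∃ n, A / 2 < f n (-(k:ℤ)) ∧ ∀ m < n, f m (-(k:ℤ)) ≤ A / 2 := by
      intro k
      classical
      exact ⟨Nat.find (hc (-(k:ℤ))), Nat.find_spec (hc (-(k:ℤ))), fun m hm =>
        not_lt.1 (Nat.find_min (hc (-(k:ℤ))) hm)⟩
    choose n hn1 hn2 using hn
    let P : ℕ → ℤ → ℝ := fun k i => ⨆ m : Fin (n k), f m (i + -(k:ℤ))
    let Q : ℕ → ℤ → ℝ := fun k i => ⨆ m : Fin (n k), g m (i + -(k:ℤ))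
    have PI : ∀ k i, P k i ∈ Icc (0:ℝ) 1 := fun k i => sup_mem (fun j => fI _ _)
    have QI : ∀ k i, Q k i ∈ Icc (0:ℝ) 1 := fun k i => sup_mem (fun j => gI _ _)
    let U : Ultrafilter ℕ := hyperfilter ℕ
    have hU : (U : Filter ℕ) ≤ atTop := Nat.hyperfilter_le_atTop
    choose p tP using fun i => ultra_lim (U := U) (fun k => PI k i)
    choose q tQ using fun i => ultra_lim (U := U) (fun k => QI k i)
    have te : ∀ i : ℤ, Tendsto (fun k : ℕ => f 0 (i + -(k:ℤ))) U (nhds 0) := by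
      intro i
      refine Tendsto.mono_left ?_ hU
      apply f00.comp
      apply tendsto_atBot_add_const_left
      exact tendsto_neg_atTop_atBot.comp tendsto_natCast_atTop_atTop
    have shI : ∀ {ι : Type} {F : ι → ℤ → ℝ} (_ : ∀ j i, F j i ∈ Icc (0:ℝ) 1) (j : ι) (i k : ℤ),
        dconv (F j) w (i + k) ≤ dconv (fun i => ⨆ j, F j (i + k)) w i := by
      intro ι F FI j i k
      rw [dc_shift]
      exact dc_le W (fun _ => FI _ _) (fun _ => sup_mem (fun _ => FI _ _))
        (fun i => le_sup1 (x := fun j => F j (i + k)) (fun j => FI _ _) j) i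
    have fstep : ∀ k i m, m < n k → f (m + 1) (i + -(k:ℤ)) ≤ hf (dconv (Q k) w i) := by
      intro k i m hm
      rw [h2]
      exact H.mf.1 (dc_mem W (gI _) _) (dc_mem W (QI k) i)
        (shI (F := fun m : Fin (n k) => g m) (fun _ => gI _) ⟨m, hm⟩ i _)
    have S := H.limit (l := U) (P := P) (P' := P)
      (Q := Q) (e := fun k i => f 0 (i + -(k:ℤ))) (p := p) (q := q)
      (fun k => smono (F := fun (m : Fin (n k)) i => f m (i + -(k:ℤ)))
        (fun _ _ _ h => fm _ (by linarith)) (fun _ _ => fI _ _))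
      (fun k => smono (F := fun (m : Fin (n k)) i => g m (i + -(k:ℤ)))
        (fun _ _ _ h => gm _ (by linarith)) (fun _ _ => gI _ _))
      PI QI tP tP tQ te
      (fun k i => by
        refine Real.iSup_le (fun t => ?_) (H.mg.2 (dc_mem W (PI k) i)).1
        rw [h1]
        exact H.mg.1 (dc_mem W (fI _) _) (dc_mem W (PI k) i)
          (shI (F := fun m : Fin (n k) => f m) (fun _ => fI _) t i _))
      (fun k i => by
        refine Real.iSup_le (fun t => ?_) (le_max_of_le_left (fI _ _).1)
        rcases t with ⟨t, ht⟩
        cases t with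
        | zero => exact le_max_left _ _
        | succ m => exact le_max_of_le_right (fstep k i m (by lia)))
    have hz := H.vanish S ⟨0, lt_of_le_of_lt (le_of_tendsto (tP 0)
      (Eventually.of_forall fun k => Real.iSup_le
        (fun t => by simpa using hn2 k t t.2) (by linarith))) (half_lt_self A0)⟩
    have tQ0 := dc_tendsto W QI tQ 0
    have q0 : q = fun _ => 0 := funext hz.2
    rw [q0, dc_const W] at tQ0
    have hA1 : A / 2 ≤ 1 := (hn1 0).le.trans (fI _ _).2
    have S0 : SubPt hf hg 0 (A / 2) := by
      refine ⟨by simp, ⟨by linarith, hA1⟩, fun y hy _ => (H.mg.2 hy).1, fun y hy hy0 => ?_⟩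
      obtain ⟨k, hk1, hk2⟩ := ((tQ0.eventually_lt_const hy0).and
        ((te 0).eventually_lt_const (half_pos A0))).exists
      have hk3 := hn1 k
      rcases hnk : n k with _ | m
      · rw [hnk] at hk3
        simp only [zero_add] at hk2
        linarith
      · have := fstep k 0 m (by lia)
        rw [zero_add, ← hnk] at this
        exact hk3.le.trans (this.trans (H.mf.1 (dc_mem W (QI k) 0) hy hk1.le))
    have := H.small S0 (by simpa using A0)
    linarith [this.2]
lemma Xinv_gi {h : ℝ → ℝ} (H : MemX h) : GInv h (Xinv h) := by
  have bb : ∀ v, BddBelow ({1} ∪ {u ∈ Icc (0:ℝ) 1 | v ≤ h u}) := by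
    intro v
    refine ⟨0, ?_⟩
    rintro x (hx | hx)
    · rw [mem_singleton_iff.1 hx]; exact zero_le_one
    · exact hx.1.1
  have ne : ∀ v, ({1} ∪ {u ∈ Icc (0:ℝ) 1 | v ≤ h u}).Nonempty := fun v => ⟨1, Or.inl rfl⟩
  refine ⟨?_, ?_, ?_, ?_⟩
  · intro a _ b _ hab
    refine csInf_le_csInf (bb a) (ne b) ?_
    rintro x (hx | hx)
    · exact Or.inl hx
    · exact Or.inr ⟨hx.1, hab.trans hx.2⟩
  · intro v _
    refine ⟨le_csInf (ne v) ?_, csInf_le (bb v) (Or.inl rfl)⟩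
    rintro x (hx | hx)
    · rw [mem_singleton_iff.1 hx]; exact zero_le_one
    · exact hx.1.1
  · intro x _ u hu hlt
    exact csInf_le (bb x) (Or.inr ⟨hu, hlt.le⟩)
  · intro x _ u hu hlt
    refine le_csInf (ne x) ?_
    rintro y (hy | hy)
    · rw [mem_singleton_iff.1 hy]; exact hu.2
    · by_contra! hc
      exact absurd (hlt.trans_le hy.2) (not_lt.2 (H.1 hy.1 hu hc.le))

lemma refl_mem {x : ℝ} (hx : x ∈ Icc (0:ℝ) 1) : 1 - x ∈ Icc (0:ℝ) 1 :=
  ⟨by linarith [hx.2], by linarith [hx.1]⟩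

def rfl1 (h : ℝ → ℝ) (x : ℝ) : ℝ := 1 - h (1 - x)

lemma rfl1_memX {h : ℝ → ℝ} (H : MemX h) : MemX (rfl1 h) := by
  refine ⟨fun a ha b hb hab => ?_, fun a ha => refl_mem (H.2 (refl_mem ha))⟩
  have := H.1 (refl_mem hb) (refl_mem ha) (by linarith)
  unfold rfl1; linarith

lemma rfl1_gi {h p : ℝ → ℝ} (H : GInv h p) : GInv (rfl1 h) (rfl1 p) := by
  refine ⟨fun a ha b hb hab => ?_, fun a ha => refl_mem (H.maps (refl_mem ha)),
    fun x hx u hu hlt => ?_, fun x hx u hu hlt => ?_⟩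
  · have := H.mono (refl_mem hb) (refl_mem ha) (by linarith)
    unfold rfl1; linarith
  · unfold rfl1 at *
    have := H.ge_of _ (refl_mem hx) _ (refl_mem hu) (by linarith)
    linarith
  · unfold rfl1 at *
    have := H.le_of _ (refl_mem hx) _ (refl_mem hu) (by linarith)
    linarith

lemma rfl1_RR {h : ℝ → ℝ} {v u : ℝ} (H : RR (rfl1 h) v u) : LL h (1 - v) (1 - u) := by
  intro y hy hlt
  have := H (1 - y) (refl_mem hy) (by linarith)
  unfold rfl1 at this
  rw [sub_sub_cancel] at this
  linarith

lemma rfl1_LL {h : ℝ → ℝ} {v u : ℝ} (H : LL (rfl1 h) v u) : RR h (1 - v) (1 - u) := by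
  intro y hy hlt
  have := H (1 - y) (refl_mem hy) (by linarith)
  unfold rfl1 at this
  rw [sub_sub_cancel] at this
  linarith

lemma rfl1_JJ {h p : ℝ → ℝ} (H : GInv h p) {u : ℝ} (hu : u ∈ Icc (0:ℝ) 1) :
    JJ (rfl1 p) u = u - (JJ p 1 - JJ p (1 - u)) := by
  have h1 : (1:ℝ) ∈ Icc (0:ℝ) 1 := by simp
  have e : ∫ x in (0:ℝ)..u, p (1 - x) = ∫ x in (1 - u)..(1 - 0), p x :=
    intervalIntegral.integral_comp_sub_left (fun x => p x) 1
  have hint : IntervalIntegrable (fun x => p (1 - x)) volume 0 u := by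
    have := (gi_int H h1 (refl_mem hu)).comp_sub_left 1
    simpa using this
  rw [JJ_sub H (refl_mem hu) h1]
  unfold JJ rfl1
  rw [intervalIntegral.integral_sub (by simp) hint, e]
  simp

lemma cross_of {hf hg : ℝ → ℝ} {u v : ℝ} (S : SubPt hf hg u v)
    (l1 : LL hg v u) (l2 : LL hf u v) : IsCrossing hf hg u v := by
  have key : ∀ {h : ℝ → ℝ} {v u : ℝ}, u ∈ Icc (0:ℝ) 1 → v ∈ Icc (0:ℝ) 1 → RR h v u → LL h v u →
      u ∈ Icc (lm h v) (rm h v) := by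
    intro h v u hu hv r l
    constructor
    · unfold lm
      split_ifs with h0
      · exact hu.1
      · refine csSup_le ⟨h 0, 0, ⟨le_rfl, not_le.1 h0⟩, rfl⟩ ?_
        rintro _ ⟨y, hy, rfl⟩
        exact l y ⟨hy.1, hy.2.le.trans hv.2⟩ hy.2
    · unfold rm
      split_ifs with h0
      · exact hu.2
      · refine le_csInf ⟨h 1, 1, ⟨not_le.1 h0, le_rfl⟩, rfl⟩ ?_
        rintro _ ⟨y, hy, rfl⟩
        exact r y ⟨hv.1.trans hy.1.le, hy.2⟩ hy.1
  exact ⟨S.hu, S.hv, key S.hu S.hv S.rg l1, key S.hv S.hu S.rf l2⟩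

lemma dker_wt {ω : ℝ → ℝ} {Δ : ℝ} (hΔ : 0 < Δ) (hω : IsAveragingKernel ω) : Wt (dker ω Δ) := by
  obtain ⟨ev, nn, -, hi, h1⟩ := hω
  refine ⟨fun i => ?_, fun i => ?_, ?_⟩
  · exact intervalIntegral.integral_nonneg (by nlinarith) (fun x _ => nn x)
  · unfold dker
    have := intervalIntegral.integral_comp_neg (a := ((i:ℝ) - 1/2) * Δ) (b := ((i:ℝ) + 1/2) * Δ) ω
    simp only [ev] at this
    rw [this]
    push_cast
    congr 1 <;> ring
  · have hs := (hi.comp_mul_left' hΔ.ne').hasSum_intervalIntegral (-(1/2))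
    rw [Measure.integral_comp_mul_left, h1] at hs
    have hs' := hs.mul_left Δ
    simp only [intervalIntegral.integral_comp_mul_left _ hΔ.ne'] at hs'
    have e1 : Δ * |Δ⁻¹| • (1:ℝ) = 1 := by
      rw [abs_of_pos (inv_pos.2 hΔ)]
      simp [hΔ.ne']
    rw [e1] at hs'
    have e2 : dker ω Δ = fun i : ℤ => Δ * Δ⁻¹ • ∫ x in Δ * (-(1 / 2) + (i:ℝ))..Δ * (-(1 / 2) + (i:ℝ) + 1), ω x := by
     funext n
     unfold dker
     rw [smul_eq_mul, mul_inv_cancel_left₀ hΔ.ne']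
     congr 1 <;> ring
    rw [e2]
    exact hs'

lemma dker_le {ω : ℝ → ℝ} {Δ : ℝ} (hΔ : 0 < Δ) (hω : IsAveragingKernel ω) (i : ℤ) :
    dker ω Δ i ≤ Δ * kerSup ω := by
  obtain ⟨ev, nn, bv, hi, h1⟩ := hω
  have hb : ∃ C, ∀ x, ‖ω x‖ ≤ C := by
    refine ⟨‖ω 0‖ + (eVariationOn ω univ).toReal, fun x => ?_⟩
    have h3 := bv.dist_le (mem_univ x) (mem_univ 0)
    rw [dist_eq_norm] at h3
    have := norm_le_norm_add_norm_sub' (ω x) (ω 0)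
    linarith
  obtain ⟨C, hC⟩ := hb
  have hfin : eLpNorm ω ⊤ volume ≠ ⊤ :=
    (memLp_top_of_bound hi.aestronglyMeasurable C (Eventually.of_forall hC)).2.ne
  have hae : ∀ᵐ x, ω x ≤ kerSup ω := by
    have := ae_le_eLpNormEssSup (f := ω) (μ := volume)
    filter_upwards [this] with x hx
    rw [← eLpNorm_exponent_top] at hx
    have h4 := ENNReal.toReal_mono hfin hx
    rw [toReal_enorm] at h4
    exact (le_abs_self _).trans h4
  have hle : ((i:ℝ) - 1/2) * Δ ≤ ((i:ℝ) + 1/2) * Δ := by nlinarith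
  have := intervalIntegral.integral_mono_ae hle hi.intervalIntegrable
    (intervalIntegrable_const (c := kerSup ω)) hae
  unfold dker
  refine this.trans (le_of_eq ?_)
  rw [intervalIntegral.integral_const, smul_eq_mul]; ring

lemma dc_refl {w f : ℤ → ℝ} (W : Wt w) (fI : ∀ i, f i ∈ Icc (0:ℝ) 1) (i : ℤ) :
    dconv (fun j => 1 - f (-j)) w i = 1 - dconv f w (-i) := by
  have e : dconv f w (-i) = ∑' j, w (i - j) * f (-j) := by
    unfold dconv
    rw [← (Equiv.neg ℤ).tsum_eq]
    refine tsum_congr (fun j => ?_)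
    rw [Equiv.neg_apply, ← W.ev]
    congr 2; ring
  have s := dc_sum (f := fun j => f (-j)) W (fun _ => fI _) i
  have e1 : (1:ℝ) = ∑' j, w (i - j) := (shift_sum W.sm i).tsum_eq.symm
  rw [e]
  conv_rhs => rw [e1, ← (shift_sum W.sm i).summable.tsum_sub s]
  unfold dconv
  exact tsum_congr (fun j => by ring)

/-- **Discrete spatial convergence.** -/
theorem discrete_spatial_convergence
    (ω hf hg : ℝ → ℝ) (Δ : ℝ) (hΔ : 0 < Δ)
    (hω : IsAveragingKernel ω) (hreg : IsRegularKernel ω)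
    (hhf : MemX hf) (hhg : MemX hg)
    (hgap : StrictPosGap hf hg)
    (hΔsmall : Δ < |Agap hf hg| / kerSup ω)
    (f0 : ℝ → ℝ) (hf0 : MemPsi f0) (hf0i : Interpolates f0 0 1)
    (fd gd : ℕ → ℤ → ℝ)
    (hinit : ∀ i : ℤ, fd 0 i = f0 ((i : ℝ) * Δ))
    (hd1 : ∀ t i, gd t i = hg (dconv (fd t) (dker ω Δ) i))
    (hd2 : ∀ t i, fd (t + 1) i = hf (dconv (gd t) (dker ω Δ) i)) :
    (0 < Agap hf hg →
      ∀ i : ℤ, Filter.Tendsto (fun t => fd t i) Filter.atTop (nhds 0)) ∧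
    (Agap hf hg < 0 →
      ∀ i : ℤ, Filter.Tendsto (fun t => fd t i) Filter.atTop (nhds 1)) := by
  have W := dker_wt hΔ hω
  have hk : 0 < kerSup ω := by
    have hk0 : 0 ≤ kerSup ω := ENNReal.toReal_nonneg
    rcases hk0.eq_or_lt with h | h
    · rw [← h, div_zero] at hΔsmall; linarith
    · exact h
  have hM := dker_le hΔ hω
  have hMA : Δ * kerSup ω < |Agap hf hg| := (lt_div_iff₀ hk).1 hΔsmall
  have Hf := Xinv_gi hhf
  have Hg := Xinv_gi hhg
  have hPot : ∀ u v, Pot hf hg u v = PP (Xinv hf) (Xinv hg) u v := fun u v => rfl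
  have fm0 : Monotone (fd 0) := by
    intro i j hij
    rw [hinit, hinit]
    exact hf0.1 (mul_le_mul_of_nonneg_right (by exact_mod_cast hij) hΔ.le)
  have fI0 : ∀ i, fd 0 i ∈ Icc (0:ℝ) 1 := fun i => by rw [hinit]; exact hf0.2 _
  constructor
  · intro hA i
    rw [abs_of_pos hA] at hMA
    have H : Hyp hf hg (Xinv hf) (Xinv hg) (dker ω Δ) (Agap hf hg) (Δ * kerSup ω) := by
      refine ⟨W, Hf, Hg, hhf, hhg, hM, hMA, fun u v S l1 l2 h0 => ?_⟩
      by_cases h1 : u = 1 ∧ v = 1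
      · rw [h1.1, h1.2]; exact le_rfl
      · exact ((le_max_right _ _).trans_lt (hgap.2 u v (cross_of S l1 l2) h0 h1)).le
    refine H.main fm0 fI0 ?_ hd1 hd2 i
    rw [show fd 0 = fun i : ℤ => f0 ((i:ℝ) * Δ) from funext hinit]
    exact hf0i.1.comp ((tendsto_intCast_atBot_iff.2 tendsto_id).atBot_mul_const hΔ)
  · intro hA i
    rw [abs_of_neg hA] at hMA
    have H : Hyp (rfl1 hf) (rfl1 hg) (rfl1 (Xinv hf)) (rfl1 (Xinv hg)) (dker ω Δ)
        (-Agap hf hg) (Δ * kerSup ω) := by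
      refine ⟨W, rfl1_gi Hf, rfl1_gi Hg, rfl1_memX hhf, rfl1_memX hhg, hM, hMA,
        fun u v S l1 l2 h0 => ?_⟩
      have hC := cross_of (u := 1 - u) (v := 1 - v)
        ⟨refl_mem S.hu, refl_mem S.hv, rfl1_LL l1, rfl1_LL l2⟩ (rfl1_RR S.rg) (rfl1_RR S.rf)
      have e : PP (rfl1 (Xinv hf)) (rfl1 (Xinv hg)) u v = Pot hf hg (1 - u) (1 - v) - Agap hf hg := by
        unfold Agap
        rw [hPot, hPot]
        unfold PP
        rw [rfl1_JJ Hf S.hv, rfl1_JJ Hg S.hu]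
        ring
      rw [e]
      have : 0 ≤ Pot hf hg (1 - u) (1 - v) := by
        by_cases h1 : 1 - u = 0 ∧ 1 - v = 0
        · rw [h1.1, h1.2]; simp [Pot]
        · exact ((le_max_left _ _).trans_lt (hgap.2 _ _ hC h1
            (fun h => h0 ⟨by linarith [h.1], by linarith [h.2]⟩))).le
      linarith
    have ff : ∀ t, (∀ i, fd t i ∈ Icc (0:ℝ) 1) := by
      intro t
      induction t with
      | zero => exact fI0
      | succ t ih =>
        intro i
        rw [hd2]
        refine hhf.2 (dc_mem W (fun j => ?_) i)
        rw [hd1]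
        exact hhg.2 (dc_mem W ih j)
    have gg : ∀ t, (∀ i, gd t i ∈ Icc (0:ℝ) 1) := fun t i => by
      rw [hd1]; exact hhg.2 (dc_mem W (ff t) i)
    have := H.main (f := fun t i => 1 - fd t (-i)) (g := fun t i => 1 - gd t (-i))
      (fun i j hij => by
        have := fm0 (show -j ≤ -i by linarith)
        simp only; linarith)
      (fun i => refl_mem (fI0 _))
      (by
        have h : Tendsto (fun i : ℤ => fd 0 (-i)) atBot (nhds 1) := by
          simp only [hinit]
          exact hf0i.2.comp ((tendsto_intCast_atTop_atTop.comp tendsto_neg_atBot_atTop).atTop_mul_const hΔ)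
        simpa using h.const_sub 1)
      (fun t i => by
        rw [dc_refl W (ff t), hd1]
        simp [rfl1])
      (fun t i => by
        rw [dc_refl W (gg t), hd2]
        simp [rfl1])
      (-i)
    simpa using this.const_sub 1
end
end
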